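/- arXiv:2507.07279 — 2 statements merged into one kernel-verified Lean document; each statement's English description precedes it below -/
import Mathlib

section
/- Let n ≥ 1 and let f : ℝ^{2n+1} → ℝ^{2n+1} be a diffeomorphism that is connected to the identity by a smooth path of diffeomorphisms. Then there exists a null smooth path of diffeomorphisms (g_t)_{t∈[0,1]} of ℝ^{2n+1} with g_0 = id and g_1 = f. -/
open Set Function

noncomputable section

/-- `ℝ^{2n+1}` with coordinates `(x, y, z) ∈ ℝⁿ × ℝⁿ × ℝ`. -/
abbrev E (n : ℕ) : Type := (Fin n → ℝ) × (Fin n → ℝ) × ℝ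

/-- The standard contact form `α₀ = dz + ∑ xᵢ dyᵢ`: at the point `p = (x,y,z)` it sends the
vector `v = (u,w,c)` to `c + ∑ xᵢ wᵢ`. -/
def α₀ (n : ℕ) (p v : E n) : ℝ := v.2.2 + ∑ i, p.1 i * v.2.1 i

/-- A diffeomorphism of `ℝ^{2n+1}`: a smooth bijection with smooth inverse. -/
def IsDiffeo (n : ℕ) (f : E n → E n) : Prop :=
  ContDiff ℝ (⊤ : ℕ∞) f ∧ ∃ g : E n → E n, ContDiff ℝ (⊤ : ℕ∞) g ∧ LeftInverse g f ∧ RightInverse g f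

/-- A smooth path of diffeomorphisms, parametrized by `t ∈ [0,1]` (smoothly extended to `ℝ`):
a smooth map such that `g_t := g(t,·)` is a diffeomorphism for every `t ∈ [0,1]`. -/
def IsSmoothPath (n : ℕ) (g : ℝ × E n → E n) : Prop :=
  ContDiff ℝ (⊤ : ℕ∞) g ∧ ∀ t ∈ Icc (0:ℝ) 1, IsDiffeo n (fun p => g (t, p))

/-- The time derivative `∂ₜ g(t,q)` of a path. -/
def pathDeriv (n : ℕ) (g : ℝ × E n → E n) (t : ℝ) (q : E n) : E n :=
  deriv (fun s => g (s, q)) t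

/-- A path is positive if `α₀(g(t,q))(∂ₜ g(t,q)) > 0` for all `t ∈ [0,1]` and all `q`. -/
def IsPositivePath (n : ℕ) (g : ℝ × E n → E n) : Prop :=
  ∀ t ∈ Icc (0:ℝ) 1, ∀ q, 0 < α₀ n (g (t, q)) (pathDeriv n g t q)

/-- A path is null if `α₀(g(t,q))(∂ₜ g(t,q)) = 0` for all `t ∈ [0,1]` and all `q`. -/
def IsNullPath (n : ℕ) (g : ℝ × E n → E n) : Prop :=
  ∀ t ∈ Icc (0:ℝ) 1, ∀ q, α₀ n (g (t, q)) (pathDeriv n g t q) = 0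

/-- A path is compactly supported if all `g(t,·)` are the identity outside a fixed compact set. -/
def IsCompactlySupportedPath (n : ℕ) (g : ℝ × E n → E n) : Prop :=
  ∃ K : Set (E n), IsCompact K ∧ ∀ t ∈ Icc (0:ℝ) 1, ∀ p ∉ K, g (t, p) = p

/-- `f` is connected to the identity by a smooth path of diffeomorphisms. -/
def ConnToId (n : ℕ) (f : E n → E n) : Prop :=
  ∃ g : ℝ × E n → E n, IsSmoothPath n g ∧ (∀ p, g (0, p) = p) ∧ (∀ p, g (1, p) = f p)

/-- `f` is connected to the identity by a compactly supported smooth path of diffeomorphisms. -/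
def ConnToIdCompactlySupported (n : ℕ) (f : E n → E n) : Prop :=
  ∃ g : ℝ × E n → E n, IsSmoothPath n g ∧ IsCompactlySupportedPath n g ∧
    (∀ p, g (0, p) = p) ∧ (∀ p, g (1, p) = f p)

/-! A compactly supported isotopy can be replaced by a null one. For a diffeomorphism near the
identity, the displacement `v` at `q` splits into three straight moves: the `x`-part of `v`, which
`α₀` annihilates; a horizontal lift of a move in the `y`-directions; and a second horizontal lift,
made after a translation by `b` in the `x`-directions. The lifts of a move by `w` at `x` and of the
move back at `x + b` cancel up to `(b ⬝ᵥ w) ∂/∂z`, so choosing `w` along `b` produces the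
`z`-component. Long isotopies are cut into short ones.

By the Alexander trick, a compactly supported diffeomorphism fixing a ball pointwise agrees, on any
given bounded set, with the end of a compactly supported isotopy fixing that ball. Hence compactly
supported diffeomorphisms that agree with `f` on larger and larger balls can be chosen so that
consecutive ones are joined by a null isotopy which is stationary on a large ball. Running all these
isotopies during `[0, 1)` gives a path that near each point moves only finitely often, and that
therefore extends smoothly by `f` at time `1`. -/

open Filter Topology Metric Bornology Real
open scoped NNReal ContDiff Manifold

section Diffeomorphisms

variable {F : Type*} [NormedAddCommGroup F] [NormedSpace ℝ F]

/-- The group of smooth diffeomorphisms of a normed space, with `φ * ψ = φ ∘ ψ`. -/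
instance diffeoGroup : Group (F ≃ₘ[ℝ] F) where
  mul φ ψ := ψ.trans φ
  one := Diffeomorph.refl 𝓘(ℝ, F) F ∞
  inv φ := φ.symm
  mul_assoc _ _ _ := rfl
  one_mul _ := rfl
  mul_one _ := rfl
  inv_mul_cancel φ := φ.self_trans_symm

@[simp] theorem diffeo_mul_apply (φ ψ : F ≃ₘ[ℝ] F) (q : F) : (φ * ψ) q = φ (ψ q) := rfl

@[simp] theorem diffeo_one_apply (q : F) : (1 : F ≃ₘ[ℝ] F) q = q := rfl

@[simp] theorem diffeo_inv_apply_self (φ : F ≃ₘ[ℝ] F) (q : F) : φ⁻¹ (φ q) = q :=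
  φ.symm_apply_apply q

@[simp] theorem diffeo_apply_inv_self (φ : F ≃ₘ[ℝ] F) (q : F) : φ (φ⁻¹ q) = q :=
  φ.apply_symm_apply q

theorem diffeo_inv_apply_eq_self {φ : F ≃ₘ[ℝ] F} {q : F} (h : φ q = q) : φ⁻¹ q = q := by
  simpa [h] using diffeo_inv_apply_self φ q

theorem isDiffeo_iff_exists_diffeo {n : ℕ} {f : E n → E n} :
    IsDiffeo n f ↔ ∃ φ : E n ≃ₘ[ℝ] E n, ⇑φ = f := by
  constructor
  · rintro ⟨hf, g, hg, hgf, hfg⟩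
    exact ⟨⟨⟨f, g, hgf, hfg⟩, hf.contMDiff, hg.contMDiff⟩, rfl⟩
  · rintro ⟨φ, rfl⟩
    exact ⟨φ.contDiff, φ.symm, φ.symm.contDiff, φ.symm_apply_apply, φ.apply_symm_apply⟩

theorem exists_diffeo_eq_id_add_of_nnnorm_fderiv_le [CompleteSpace F] {v : F → F}
    (hv : ContDiff ℝ ∞ v) {c : ℝ≥0} (hc : c < 1) (hvc : ∀ q, ‖fderiv ℝ v q‖₊ ≤ c) :
    ∃ φ : F ≃ₘ[ℝ] F, ∀ q, φ q = q + v q := by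
  have hdiff : Differentiable ℝ v := hv.differentiable (by simp)
  have happrox : ApproximatesLinearOn (fun q => q + v q)
      (ContinuousLinearEquiv.refl ℝ F : F →L[ℝ] F) univ c := fun x _ y _ => by
    have := (lipschitzWith_of_nnnorm_fderiv_le hdiff hvc).norm_sub_le x y
    simpa [add_sub_add_comm] using this
  have hc' : Subsingleton F ∨ c < ‖((ContinuousLinearEquiv.refl ℝ F).symm : F →L[ℝ] F)‖₊⁻¹ := by
    refine (subsingleton_or_nontrivial F).imp_right fun _ : Nontrivial F => ?_
    simpa using hc
  let Φ : F ≃ₜ F := happrox.toHomeomorph _ hc'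
  have hsmooth : ContDiff ℝ ∞ Φ := contDiff_id.add hv
  have hderiv : ∀ q, ∃ L : F ≃L[ℝ] F, HasFDerivAt Φ (L : F →L[ℝ] F) q := by
    intro q
    have hlt : ‖-fderiv ℝ v q‖ < 1 := by
      rw [norm_neg]
      exact (NNReal.coe_le_coe.2 (hvc q)).trans_lt hc
    have hsum : ((ContinuousLinearEquiv.ofUnit (Units.oneSub _ hlt) : F ≃L[ℝ] F) : F →L[ℝ] F) =
        ContinuousLinearMap.id ℝ F + fderiv ℝ v q :=
      ContinuousLinearMap.ext fun w => sub_neg_eq_add w (fderiv ℝ v q w)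
    exact ⟨_, hsum ▸ (hasFDerivAt_id q).add (hdiff q).hasFDerivAt⟩
  choose L hL using hderiv
  exact ⟨⟨Φ.toEquiv, hsmooth.contMDiff, (Φ.contDiff_symm hL hsmooth).contMDiff⟩, fun _ => rfl⟩

theorem eventually_exists_diffeo_eq_id_add [CompleteSpace F]
    {A : Type*} [NormedAddCommGroup A] [NormedSpace ℝ A] {K : Set F} (hK : IsCompact K)
    {Ψ : A × F → F} (hΨ : ContDiff ℝ ∞ Ψ) (hsupp : ∀ a, ∀ q ∉ K, Ψ (a, q) = 0)
    {a₀ : A} (hzero : ∀ q, Ψ (a₀, q) = 0) :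
    ∀ᶠ a in 𝓝 a₀, ∃ φ : F ≃ₘ[ℝ] F, ∀ q, φ q = q + Ψ (a, q) := by
  have hcont : Continuous fun z : A × F => ‖fderiv ℝ (fun q => Ψ (z.1, q)) z.2‖₊ :=
    (ContDiff.fderiv (m := ∞) (n := 0) (f := fun (z : A × F) q => Ψ (z.1, q))
      (by fun_prop) contDiff_snd (by simp)).continuous.nnnorm
  have hsmall : ∀ᶠ a in 𝓝 a₀, ∀ q ∈ K, ‖fderiv ℝ (fun q => Ψ (a, q)) q‖₊ < 1 / 2 := by
    refine hK.eventually_forall_of_forall_eventually fun q _ => ?_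
    refine hcont.continuousAt.eventually_lt continuousAt_const ?_
    simp [hzero]
  filter_upwards [hsmall] with a ha
  refine exists_diffeo_eq_id_add_of_nnnorm_fderiv_le (c := 1 / 2)
    (hΨ.comp (contDiff_prodMk_right a)) (by norm_num) fun q => ?_
  by_cases hq : q ∈ K
  · exact (ha q hq).le
  · have : (fun q => Ψ (a, q)) =ᶠ[𝓝 q] fun _ => 0 := by
      filter_upwards [hK.isClosed.isOpen_compl.mem_nhds hq] with p hp using hsupp a p hp
    simp [this.fderiv_eq]

theorem eventually_forall_mem_Icc_exists_diffeo_eq_id_add [CompleteSpace F]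
    {K : Set F} (hK : IsCompact K) {W : ℝ × F → F} (hW : ContDiff ℝ ∞ W)
    (hsupp : ∀ t, ∀ q ∉ K, W (t, q) = 0) {s : ℝ} (hzero : ∀ q, W (s, q) = 0)
    {D : ℝ × F × F → F} (hD : ContDiff ℝ ∞ D) (hD0 : ∀ τ q, D (τ, q, 0) = 0) :
    ∀ᶠ t in 𝓝 s, ∀ τ ∈ Icc (0 : ℝ) 1,
      ∃ φ : F ≃ₘ[ℝ] F, ∀ q, φ q = q + D (τ, q, W (t, q)) := by
  refine isCompact_Icc.eventually_forall_of_forall_eventually fun τ _ => ?_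
  refine eventually_exists_diffeo_eq_id_add hK
    (Ψ := fun z : (ℝ × ℝ) × F => D (z.1.2, z.2, W (z.1.1, z.2))) (by fun_prop) ?_ ?_
  · intro a q hq
    simp [hsupp a.1 q hq, hD0]
  · intro q
    simp [hzero, hD0]

theorem exists_contDiff_cutoff [FiniteDimensional ℝ F]
    {K U : Set F} (hK : IsCompact K) (hU : IsOpen U) (hKU : K ⊆ U) :
    ∃ χ : F → ℝ, ContDiff ℝ ∞ χ ∧ (∃ L, IsCompact L ∧ L ⊆ U ∧ ∀ q ∉ L, χ q = 0) ∧
      ∀ᶠ p in 𝓝ˢ K, χ p = 1 := by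
  obtain ⟨L, hL, hKL, hLU⟩ := exists_compact_between hK hU hKU
  obtain ⟨χ, hχ1, hχ0, -⟩ := exists_contMDiffMap_one_nhds_of_subset_interior (n := (⊤ : ℕ∞))
    𝓘(ℝ, F) hK.isClosed hKL
  exact ⟨χ, χ.contMDiff.contDiff, ⟨L, hL, hLU, hχ0⟩, hχ1⟩

end Diffeomorphisms

section Isotopies

variable {F : Type*} [NormedAddCommGroup F] [NormedSpace ℝ F]

/-- A smooth isotopy: a family of diffeomorphisms depending smoothly on a real parameter. -/
def IsIsotopy (Y : ℝ → F ≃ₘ[ℝ] F) : Prop :=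
  ContDiff ℝ ∞ fun z : ℝ × F => Y z.1 z.2

theorem IsIsotopy.contDiff_comp {Y : ℝ → F ≃ₘ[ℝ] F} (hY : IsIsotopy Y) {G : Type*}
    [NormedAddCommGroup G] [NormedSpace ℝ G] {τ : G → ℝ} (hτ : ContDiff ℝ ∞ τ) {γ : G → F}
    (hγ : ContDiff ℝ ∞ γ) : ContDiff ℝ ∞ fun x => Y (τ x) (γ x) :=
  ContDiff.comp hY (hτ.prodMk hγ)

theorem isIsotopy_const (φ : F ≃ₘ[ℝ] F) : IsIsotopy fun _ => φ :=
  φ.contDiff.comp contDiff_snd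

theorem IsIsotopy.comp_time {Y : ℝ → F ≃ₘ[ℝ] F} (hY : IsIsotopy Y) {κ : ℝ → ℝ}
    (hκ : ContDiff ℝ ∞ κ) : IsIsotopy fun t => Y (κ t) :=
  hY.contDiff_comp (hκ.comp contDiff_fst) contDiff_snd

theorem IsIsotopy.mul {Y Z : ℝ → F ≃ₘ[ℝ] F} (hY : IsIsotopy Y) (hZ : IsIsotopy Z) :
    IsIsotopy fun t => Y t * Z t :=
  hY.contDiff_comp contDiff_fst hZ

theorem IsIsotopy.exists_diffeo_eqOn_compact [FiniteDimensional ℝ F] {Y : ℝ → F ≃ₘ[ℝ] F}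
    (hY : IsIsotopy Y) {K : Set F} (hK : IsCompact K) (s t : ℝ) :
    ∃ h : F ≃ₘ[ℝ] F, h =ᶠ[cobounded F] id ∧ EqOn (h * Y s) (Y t) K := by
  have := FiniteDimensional.complete ℝ F
  refine isPreconnected_univ.induction₂ (fun s t => ∃ h : F ≃ₘ[ℝ] F,
    h =ᶠ[cobounded F] id ∧ EqOn (h * Y s) (Y t) K) ?_ ?_ ?_ (mem_univ s) (mem_univ t)
  · intro s _
    rw [nhdsWithin_univ]
    obtain ⟨χ, hχ, ⟨L, hL, -, hχL⟩, hχK⟩ := exists_contDiff_cutoff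
      (hK.image (Y s).continuous) isOpen_univ (subset_univ _)
    have hdisp : ContDiff ℝ ∞ fun z : ℝ × F => Y z.1 ((Y s)⁻¹ z.2) - z.2 :=
      (hY.contDiff_comp contDiff_fst ((Y s)⁻¹.contDiff.comp contDiff_snd)).sub contDiff_snd
    filter_upwards [eventually_exists_diffeo_eq_id_add hL (a₀ := s)
      ((hχ.comp contDiff_snd).smul hdisp) (by simp +contextual [hχL]) (by simp)] with t ⟨h, hh⟩
    refine ⟨h, ?_, fun q hq => ?_⟩
    · filter_upwards [isBounded_def.1 hL.isBounded] with q hq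
      simp [hh, hχL q hq]
    · simp [hh, hχK.self_of_nhdsSet _ (mem_image_of_mem _ hq)]
  · rintro x y z - - - ⟨h, hh, hxy⟩ ⟨k, hk, hyz⟩
    refine ⟨k * h, ?_, fun q hq => ?_⟩
    · filter_upwards [hh, hk] with q hhq hkq
      simp_all
    · rw [← hyz hq, diffeo_mul_apply k, ← hxy hq, mul_assoc, diffeo_mul_apply]
  · rintro x y - - ⟨h, hh, hxy⟩
    refine ⟨h⁻¹, hh.mono fun q hq => diffeo_inv_apply_eq_self hq, fun q hq => ?_⟩
    simp [← hxy hq]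

end Isotopies

section AlexanderTrick

variable {F : Type*} [NormedAddCommGroup F] [NormedSpace ℝ F]

/-- The homothety `q ↦ a (q - c) + c` as a diffeomorphism. -/
def homothetyDiffeo (c : F) (a : ℝˣ) : F ≃ₘ[ℝ] F where
  toFun q := (a : ℝ) • (q - c) + c
  invFun q := (↑a⁻¹ : ℝ) • (q - c) + c
  left_inv q := by simp
  right_inv q := by simp
  contMDiff_toFun :=
    (((contDiff_id.sub contDiff_const).const_smul _).add contDiff_const).contMDiff
  contMDiff_invFun :=
    (((contDiff_id.sub contDiff_const).const_smul _).add contDiff_const).contMDiff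

@[simp] theorem homothetyDiffeo_apply (c : F) (a : ℝˣ) (q : F) :
    homothetyDiffeo c a q = (a : ℝ) • (q - c) + c := rfl

theorem exists_isotopy_homothety (c : F) {ε : ℝ} (hε : 0 < ε) (hε1 : ε ≤ 1) :
    ∃ σ : ℝ → F ≃ₘ[ℝ] F, IsIsotopy σ ∧ (IsIsotopy fun t => (σ t)⁻¹) ∧ σ 0 = 1 ∧
      (∀ q, dist (σ 1 q) c = ε * dist q c) ∧
      ∀ t q, dist (σ t q) c ∈ Icc (ε * dist q c) (dist q c) := by
  set l : ℝ → ℝ := fun t => 1 - (1 - ε) * smoothTransition t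
  have hlε : ∀ t, ε ≤ l t := fun t => by nlinarith [smoothTransition.le_one t]
  have hl1 : ∀ t, l t ≤ 1 := fun t => by nlinarith [smoothTransition.nonneg t]
  have hl0 : ∀ t, l t ≠ 0 := fun t => (hε.trans_le (hlε t)).ne'
  have hl : ContDiff ℝ ∞ l := contDiff_const.sub (contDiff_const.mul smoothTransition.contDiff)
  have hhom : ∀ {a : ℝ → ℝ}, ContDiff ℝ ∞ a →
      ContDiff ℝ ∞ fun z : ℝ × F => a z.1 • (z.2 - c) + c := fun ha =>
    ((ha.comp contDiff_fst).smul (contDiff_snd.sub contDiff_const)).add contDiff_const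
  let σ : ℝ → F ≃ₘ[ℝ] F := fun t => homothetyDiffeo c (Units.mk0 (l t) (hl0 t))
  have hσ : ∀ t q, dist (σ t q) c = l t * dist q c := fun t q => by
    simp [σ, dist_eq_norm, norm_smul, abs_of_nonneg (hε.le.trans (hlε t))]
  refine ⟨σ, hhom hl, hhom (hl.inv hl0), ?_, fun q => ?_, fun t q => ?_⟩
  · ext q
    simp [σ, l]
  · simp [hσ, l]
  · rw [hσ]
    exact ⟨by gcongr; exact hlε t, mul_le_of_le_one_left dist_nonneg (hl1 t)⟩

theorem diffeo_commutator_apply_eq_self {φ σ : F ≃ₘ[ℝ] F} {q : F} (hq : φ q = q)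
    (hσq : φ (σ q) = σ q) : (φ * σ⁻¹ * φ⁻¹ * σ) q = q := by
  simp [diffeo_inv_apply_eq_self hσq, hq]

theorem exists_isotopy_of_eqOn_id_ball {φ : F ≃ₘ[ℝ] F} {c : F} {r : ℝ} (hr : 0 < r)
    (hφ : EqOn φ id (ball c r)) (hφfar : φ =ᶠ[cobounded F] id) {B : Set F} (hB : IsBounded B) :
    ∃ Y : ℝ → F ≃ₘ[ℝ] F, IsIsotopy Y ∧ Y 0 = 1 ∧ EqOn (Y 1) φ B ∧
      ∃ A, ∀ t, ∀ q ∉ closedBall c A \ ball c r, Y t q = q := by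
  obtain ⟨R, hR, hBR⟩ := hB.subset_ball_lt 0 c
  obtain ⟨ρ, -, hρ⟩ := (hasBasis_cobounded_compl_closedBall c).eventually_iff.1 hφfar
  set ε := r / (R + r)
  have hε : 0 < ε := by positivity
  have hε1 : ε ≤ 1 := (div_le_one (by positivity)).2 (by linarith)
  have hεR : ε * R < r := by
    rw [div_mul_eq_mul_div, div_lt_iff₀ (by positivity)]
    nlinarith
  obtain ⟨σ, hσ, hσinv, hσ0, hσ1, hσmem⟩ := exists_isotopy_homothety c hε hε1
  -- On `B` the commutator equals `φ` at time `1`, since `σ 1` maps `B` into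
  -- the ball fixed by `φ`.
  refine ⟨fun t => φ * (σ t)⁻¹ * φ⁻¹ * σ t, ?_, ?_, fun q hq => ?_, ρ / ε, fun t q hq => ?_⟩
  · exact (((isIsotopy_const φ).mul hσinv).mul (isIsotopy_const φ⁻¹)).mul hσ
  · simp [hσ0]
  · have hσq : σ 1 q ∈ ball c r := by
      rw [mem_ball, hσ1]
      nlinarith [mem_ball.1 (hBR hq)]
    simp [diffeo_inv_apply_eq_self (hφ hσq)]
  · by_cases hqr : q ∈ ball c r
    · exact diffeo_commutator_apply_eq_self (hφ hqr) (hφ ((hσmem t q).2.trans_lt hqr))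
    · have hfar : ρ < ε * dist q c := by
        have : ρ / ε < dist q c := by simpa [hqr] using hq
        rwa [div_lt_iff₀' hε] at this
      have hσfar : ρ < dist (σ t q) c := hfar.trans_le (hσmem t q).1
      refine diffeo_commutator_apply_eq_self (hρ ?_) (hρ ?_)
      · simpa using hσfar.trans_le (hσmem t q).2
      · simpa using hσfar

theorem exists_ball_subset_of_mem_cobounded [Nontrivial F] {s : Set F} (hs : s ∈ cobounded F) :
    ∃ c, ball c 1 ⊆ s := by
  obtain ⟨ρ, -, hρ⟩ := (hasBasis_cobounded_compl_closedBall (0 : F)).mem_iff.1 hs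
  obtain ⟨c, hc⟩ := exists_norm_eq F (by positivity : 0 ≤ |ρ| + 1)
  refine ⟨c, fun q hq => hρ ?_⟩
  have : ‖c‖ ≤ ‖q‖ + dist q c := by
    rw [dist_comm, dist_eq_norm]
    exact norm_le_insert' c q
  rw [mem_compl_iff, mem_closedBall_zero_iff, not_le]
  linarith [mem_ball.1 hq, le_abs_self ρ]

end AlexanderTrick

section NullIsotopies

variable {n : ℕ}

theorem α₀_smul (p v : E n) (c : ℝ) : α₀ n p (c • v) = c * α₀ n p v := by
  simp [α₀, mul_add, Finset.mul_sum, mul_left_comm]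

theorem α₀_zero (p : E n) : α₀ n p 0 = 0 := by
  simpa using α₀_smul p 0 0

/-- An isotopy of `ℝ^{2n+1}` all of whose velocity vectors are annihilated by `α₀`. -/
structure IsNullIsotopy (P : ℝ → E n ≃ₘ[ℝ] E n) : Prop where
  isIsotopy : IsIsotopy P
  null : ∀ t q, α₀ n (P t q) (deriv (fun s => P s q) t) = 0

theorem IsNullIsotopy.null_of_eventuallyEq {P : ℝ → E n ≃ₘ[ℝ] E n} (hP : IsNullIsotopy P)
    {γ : ℝ → E n} {t : ℝ} {q : E n} (hγ : γ =ᶠ[𝓝 t] fun s => P s q) :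
    α₀ n (γ t) (deriv γ t) = 0 := by
  rw [hγ.deriv_eq, hγ.eq_of_nhds, hP.null]

theorem IsNullIsotopy.mul_const {P : ℝ → E n ≃ₘ[ℝ] E n} (hP : IsNullIsotopy P)
    (ξ : E n ≃ₘ[ℝ] E n) : IsNullIsotopy fun t => P t * ξ :=
  ⟨hP.isIsotopy.mul (isIsotopy_const ξ), fun t q => hP.null t (ξ q)⟩

theorem α₀_deriv_comp {γ : ℝ → E n} {κ : ℝ → ℝ} {t : ℝ} (hγ : DifferentiableAt ℝ γ (κ t))
    (hκ : DifferentiableAt ℝ κ t) (hnull : α₀ n (γ (κ t)) (deriv γ (κ t)) = 0) :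
    α₀ n (γ (κ t)) (deriv (fun s => γ (κ s)) t) = 0 := by
  have : deriv (fun s => γ (κ s)) t = deriv κ t • deriv γ (κ t) := deriv.scomp t hγ hκ
  rw [this, α₀_smul, hnull, mul_zero]

theorem IsNullIsotopy.comp_time {P : ℝ → E n ≃ₘ[ℝ] E n} (hP : IsNullIsotopy P) {κ : ℝ → ℝ}
    (hκ : ContDiff ℝ ∞ κ) : IsNullIsotopy fun t => P (κ t) where
  isIsotopy := hP.isIsotopy.comp_time hκ
  null t q := α₀_deriv_comp
    ((hP.isIsotopy.contDiff_comp contDiff_id contDiff_const).differentiable (by simp) _)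
    (hκ.differentiable (by simp) t) (hP.null (κ t) q)

theorem IsNullIsotopy.concat {P P' : ℝ → E n ≃ₘ[ℝ] E n} (hP : IsNullIsotopy P)
    (hP' : IsNullIsotopy P') {a b : ℝ} (hab : a < b) {ψ : E n ≃ₘ[ℝ] E n}
    (hPψ : ∀ t ≥ a, P t = ψ) (hP'ψ : ∀ t ≤ b, P' t = ψ) :
    IsNullIsotopy fun t => P' t * ψ⁻¹ * P t where
  isIsotopy := (hP'.isIsotopy.mul (isIsotopy_const ψ⁻¹)).mul hP.isIsotopy
  null t q := by
    rcases lt_or_ge t b with ht | ht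
    · refine hP.null_of_eventuallyEq (q := q) ?_
      filter_upwards [Iio_mem_nhds ht] with s hs
      simp [hP'ψ s hs.le]
    · refine hP'.null_of_eventuallyEq (q := q) ?_
      filter_upwards [Ioi_mem_nhds (hab.trans_le ht)] with s hs
      simp [hPψ s hs.le]

/-- `NullIsotopicRel S φ ψ`: a null isotopy leads from `φ` to `ψ` and is stationary on `S`. It is
constant outside the time interval `[0, 1]`, so that such isotopies can be concatenated. -/
def NullIsotopicRel (S : Set (E n)) (φ ψ : E n ≃ₘ[ℝ] E n) : Prop :=
  ∃ P, IsNullIsotopy P ∧ (∀ t ≤ 0, P t = φ) ∧ (∀ t ≥ 1, P t = ψ) ∧ ∀ t, EqOn (P t) φ S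

namespace NullIsotopicRel

variable {S T : Set (E n)} {φ ψ χ ξ : E n ≃ₘ[ℝ] E n}

theorem eqOn (h : NullIsotopicRel S φ ψ) : EqOn ψ φ S := by
  obtain ⟨P, -, -, hP1, hPS⟩ := h
  exact hP1 1 le_rfl ▸ hPS 1

theorem mono (h : NullIsotopicRel S φ ψ) (hTS : T ⊆ S) : NullIsotopicRel T φ ψ := by
  obtain ⟨P, hP, hP0, hP1, hPS⟩ := h
  exact ⟨P, hP, hP0, hP1, fun t => (hPS t).mono hTS⟩

theorem exists_reparam (h : NullIsotopicRel S φ ψ) {a b : ℝ} (hab : a < b) :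
    ∃ P, IsNullIsotopy P ∧ (∀ t ≤ a, P t = φ) ∧ (∀ t ≥ b, P t = ψ) ∧ ∀ t, EqOn (P t) φ S := by
  obtain ⟨P, hP, hP0, hP1, hPS⟩ := h
  have hba : 0 < b - a := sub_pos.2 hab
  refine ⟨_, hP.comp_time (κ := fun t => (t - a) / (b - a)) (by fun_prop), fun t ht => hP0 _ ?_,
    fun t ht => hP1 _ ?_, fun t => hPS _⟩
  · exact div_nonpos_of_nonpos_of_nonneg (by linarith) hba.le
  · exact (one_le_div hba).2 (by linarith)

theorem symm (h : NullIsotopicRel S φ ψ) : NullIsotopicRel S ψ φ := by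
  have hψφ := h.eqOn
  obtain ⟨P, hP, hP0, hP1, hPS⟩ := h
  exact ⟨_, hP.comp_time (κ := fun t => 1 - t) (by fun_prop), fun t ht => hP1 _ (by linarith),
    fun t ht => hP0 _ (by linarith), fun t => (hPS _).trans hψφ.symm⟩

theorem trans (h : NullIsotopicRel S φ ψ) (h' : NullIsotopicRel S ψ χ) :
    NullIsotopicRel S φ χ := by
  have hψφ := h.eqOn
  obtain ⟨P, hP, hP0, hP1, hPS⟩ := h.exists_reparam (a := 0) (b := 1 / 3) (by norm_num)
  obtain ⟨P', hP', hP'0, hP'1, hP'S⟩ := h'.exists_reparam (a := 2 / 3) (b := 1) (by norm_num)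
  refine ⟨_, hP.concat hP' (by norm_num) hP1 hP'0, fun t ht => ?_, fun t ht => ?_, fun t => ?_⟩
  · simp [hP0 t ht, hP'0 t (by linarith)]
  · simp [hP1 t (by linarith), hP'1 t ht]
  · rcases le_total t (2 / 3) with ht | ht
    · simpa [hP'0 t ht] using hPS t
    · simpa [hP1 t (by linarith)] using (hP'S t).trans hψφ

theorem mul_right (h : NullIsotopicRel S φ ψ) (hξ : MapsTo ξ T S) :
    NullIsotopicRel T (φ * ξ) (ψ * ξ) := by
  obtain ⟨P, hP, hP0, hP1, hPS⟩ := h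
  exact ⟨_, hP.mul_const ξ, fun t ht => by simp only [hP0 t ht],
    fun t ht => by simp only [hP1 t ht], fun t q hq => hPS t (hξ hq)⟩

end NullIsotopicRel

theorem IsSmoothPath.exists_isotopy {g : ℝ × E n → E n} (hg : IsSmoothPath n g) :
    ∃ Y : ℝ → E n ≃ₘ[ℝ] E n, IsIsotopy Y ∧ ∀ t q, Y t q = g (smoothTransition t, q) := by
  choose Y hY using fun t => isDiffeo_iff_exists_diffeo.1 (hg.2 _
    ⟨smoothTransition.nonneg t, smoothTransition.le_one t⟩)
  refine ⟨Y, ?_, fun t => congrFun (hY t)⟩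
  simp only [IsIsotopy, hY]
  exact hg.1.comp ((smoothTransition.contDiff.comp contDiff_fst).prodMk contDiff_snd)

theorem IsNullPath.nullIsotopicRel {g : ℝ × E n → E n} (hnull : IsNullPath n g)
    (hg : IsSmoothPath n g) {φ ψ : E n ≃ₘ[ℝ] E n} (hφ : ∀ q, g (0, q) = φ q)
    (hψ : ∀ q, g (1, q) = ψ q) {S : Set (E n)}
    (hS : ∀ t ∈ Icc (0 : ℝ) 1, ∀ q ∈ S, g (t, q) = φ q) : NullIsotopicRel S φ ψ := by
  obtain ⟨Y, hY, hYg⟩ := hg.exists_isotopy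
  have hmem : ∀ t, smoothTransition t ∈ Icc (0 : ℝ) 1 := fun t =>
    ⟨smoothTransition.nonneg t, smoothTransition.le_one t⟩
  refine ⟨Y, ⟨hY, fun t q => ?_⟩, fun t ht => ?_, fun t ht => ?_, fun t q hq => ?_⟩
  · simp only [hYg]
    exact α₀_deriv_comp (γ := fun s => g (s, q))
      ((hg.1.comp (contDiff_prodMk_left q)).differentiable (by simp) _)
      (smoothTransition.contDiffAt.differentiableAt (n := ∞) (by simp)) (hnull _ (hmem t) q)
  · ext1 q
    rw [hYg, smoothTransition.zero_of_nonpos ht, hφ]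
  · ext1 q
    rw [hYg, smoothTransition.one_of_one_le ht, hψ]
  · rw [hYg, hS _ (hmem t) q hq]

theorem nullIsotopicRel_mul_of_line {σ φ ψ : E n ≃ₘ[ℝ] E n} {K S : Set (E n)} {B : E n → E n}
    {b : Fin n → ℝ} (hσ : ∀ᶠ p in 𝓝ˢ K, σ p = p + (b, 0, 0)) (hB : ContDiff ℝ ∞ B)
    (hline : ∀ τ ∈ Icc (0 : ℝ) 1, ∃ χ : E n ≃ₘ[ℝ] E n, ∀ q, χ q = φ q + τ • B q)
    (hψ : ∀ q, ψ q = φ q + B q) (hφK : ∀ q ∉ K, φ q = q) (hBK : ∀ q ∉ K, B q = 0)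
    (hBS : ∀ q ∈ S, B q = 0) (hnull : ∀ (τ : ℝ) q, α₀ n (φ q + τ • B q + (b, 0, 0)) (B q) = 0) :
    NullIsotopicRel S (σ * φ) (σ * ψ) := by
  have hcont : ContDiff ℝ ∞ fun z : ℝ × E n => σ (φ z.2 + z.1 • B z.2) :=
    σ.contDiff.comp ((φ.contDiff.comp contDiff_snd).add
      (contDiff_fst.smul (hB.comp contDiff_snd)))
  refine IsNullPath.nullIsotopicRel (g := fun z => σ (φ z.2 + z.1 • B z.2)) ?_ ⟨hcont, ?_⟩
    (by simp) (by simp [hψ]) (fun t _ q hq => by simp [hBS q hq])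
  · intro t ht q
    -- Inside `K` the line stays in `K`, where `σ` is a translation.
    by_cases hq : q ∈ K
    · obtain ⟨χ, hχ⟩ := hline t ht
      have hχK : φ q + t • B q ∈ K := by
        by_contra hmem
        rw [← hχ] at hmem
        have : χ (χ q) = χ q := by rw [hχ (χ q), hφK _ hmem, hBK _ hmem, smul_zero, add_zero]
        exact hmem (by rwa [χ.injective this])
      have hline' : HasDerivAt (fun s : ℝ => φ q + s • B q + (b, 0, 0)) (B q) t := by
        simpa using (((hasDerivAt_id t).smul_const (B q)).const_add (φ q)).add_const (b, 0, 0)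
      have hev : (fun s : ℝ => σ (φ q + s • B q)) =ᶠ[𝓝 t] fun s => φ q + s • B q + (b, 0, 0) :=
        (show Continuous fun s : ℝ => φ q + s • B q by fun_prop).continuousAt.eventually
          (hσ.filter_mono (nhds_le_nhdsSet hχK))
      rw [pathDeriv, hev.deriv_eq, hline'.deriv]
      exact (congrArg (α₀ n · (B q)) hev.eq_of_nhds).trans (hnull t q)
    · simp [pathDeriv, hBK q hq, α₀_zero]
  · intro t ht
    obtain ⟨χ, hχ⟩ := hline t ht
    exact isDiffeo_iff_exists_diffeo.2 ⟨σ * χ, funext fun q => by simp [hχ]⟩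

theorem nullIsotopicRel_of_line {φ ψ : E n ≃ₘ[ℝ] E n} {S : Set (E n)} {B : E n → E n}
    (hB : ContDiff ℝ ∞ B)
    (hline : ∀ τ ∈ Icc (0 : ℝ) 1, ∃ χ : E n ≃ₘ[ℝ] E n, ∀ q, χ q = φ q + τ • B q)
    (hψ : ∀ q, ψ q = φ q + B q) (hBS : ∀ q ∈ S, B q = 0)
    (hnull : ∀ (τ : ℝ) q, α₀ n (φ q + τ • B q) (B q) = 0) : NullIsotopicRel S φ ψ := by
  simpa using nullIsotopicRel_mul_of_line (σ := 1) (K := univ) (b := 0) (by simp) hB hline hψ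
    (by simp) (by simp) hBS
    fun τ q => by simpa only [Prod.mk_zero_zero, add_zero] using hnull τ q

theorem exists_nullIsotopicRel_one_translation_near [NeZero n] {K S : Set (E n)}
    (hK : IsCompact K) (hS : IsClosed S) (hKS : Disjoint K S) :
    ∃ b : Fin n → ℝ, b ≠ 0 ∧ ∃ σ : E n ≃ₘ[ℝ] E n,
      NullIsotopicRel S 1 σ ∧ ∀ᶠ p in 𝓝ˢ K, σ p = p + (b, 0, 0) := by
  obtain ⟨χ, hχ, ⟨L, hL, hLS, hχL⟩, hχK⟩ :=
    exists_contDiff_cutoff hK hS.isOpen_compl hKS.subset_compl_right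
  set e : E n := (1, 0, 0)
  have hW : ContDiff ℝ ∞ fun z : ℝ × E n => z.1 • χ z.2 • e :=
    contDiff_fst.smul ((hχ.comp contDiff_snd).smul contDiff_const)
  have hline := eventually_forall_mem_Icc_exists_diffeo_eq_id_add hL hW (s := 0)
    (D := fun z => z.1 • z.2.2) (by simp +contextual [hχL]) (by simp) (by fun_prop) (by simp)
  obtain ⟨a, ha, ha0 : a ≠ 0⟩ :=
    ((hline.filter_mono nhdsWithin_le_nhds).and (self_mem_nhdsWithin (s := {0}ᶜ))).exists
  obtain ⟨σ, hσ⟩ := ha 1 (by simp)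
  refine ⟨a • 1, by simpa using ha0, σ, nullIsotopicRel_of_line (B := fun q => a • χ q • e)
    (hW.comp (contDiff_prodMk_right a)) ha (by simpa using hσ) ?_ ?_, ?_⟩
  · intro q hq
    simp [hχL q fun hqL => hLS hqL hq]
  · intro τ q
    simp [α₀, e]
  · exact hχK.mono fun p hp => by simp [hσ, hp, e]

open scoped Matrix in
theorem exists_null_decomposition {b : Fin n → ℝ} (hb : b ≠ 0) :
    ∃ D₁ D₂ D₃ : E n → E n → E n,
      (ContDiff ℝ ∞ (uncurry D₁) ∧ ContDiff ℝ ∞ (uncurry D₂) ∧ ContDiff ℝ ∞ (uncurry D₃)) ∧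
      (∀ q, D₁ q 0 = 0 ∧ D₂ q 0 = 0 ∧ D₃ q 0 = 0) ∧
      (∀ q v, D₁ q v + D₂ q v + D₃ q v = v) ∧
      (∀ (τ : ℝ) q v, α₀ n (q + τ • D₁ q v) (D₁ q v) = 0) ∧
      (∀ (τ : ℝ) q v, α₀ n (q + D₁ q v + τ • D₂ q v) (D₂ q v) = 0) ∧
      (∀ (τ : ℝ) q v, α₀ n (q + (D₁ q v + D₂ q v) + τ • D₃ q v + (b, 0, 0)) (D₃ q v) = 0) := by
  -- `lift a w` is the horizontal lift of `w` along `x = a`. In the two lifts below the multiples of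
  -- `b` leave `c q v * (b ⬝ᵥ b)` in the `z`-direction, the part of `v.2.2` that lifting `v.2.1`
  -- misses.
  let lift (a w : Fin n → ℝ) : E n := (0, w, -(a ⬝ᵥ w))
  let c (q v : E n) : ℝ := α₀ n (q + v) v / (b ⬝ᵥ b)
  have hlift : ContDiff ℝ ∞ fun z : (Fin n → ℝ) × (Fin n → ℝ) => lift z.1 z.2 := by
    simp only [lift, dotProduct]
    fun_prop
  have hc : ContDiff ℝ ∞ fun z : E n × E n => c z.1 z.2 := by
    simp only [c, α₀]
    fun_prop
  refine ⟨fun _ v => (v.1, 0, 0), fun q v => lift (q.1 + v.1) (v.2.1 + c q v • b),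
    fun q v => lift (q.1 + v.1 + b) (-(c q v • b)), ⟨?_, ?_, ?_⟩, fun q => ?_, fun q v => ?_,
    fun τ q v => ?_, fun τ q v => ?_, fun τ q v => ?_⟩
  · simp only [uncurry_def]
    fun_prop
  · exact hlift.comp (f := fun z : E n × E n => (z.1.1 + z.2.1, z.2.2.1 + c z.1 z.2 • b))
      (by fun_prop)
  · exact hlift.comp (f := fun z : E n × E n => (z.1.1 + z.2.1 + b, -(c z.1 z.2 • b)))
      (by fun_prop)
  · simp [lift, c, α₀_zero]
  · have hcb : c q v * (b ⬝ᵥ b) = v.2.2 + (q.1 + v.1) ⬝ᵥ v.2.1 :=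
      div_mul_cancel₀ _ (dotProduct_self_eq_zero.not.2 hb)
    ext i
    · simp [lift]
    · simp [lift]
    · simp [lift, dotProduct_add, add_dotProduct] at hcb ⊢
      linarith
  · simp [α₀]
  · simp [α₀, lift, dotProduct]
  · simp [α₀, lift, dotProduct]

theorem nullIsotopicRel_one_of_lines {K S : Set (E n)} (hKS : Disjoint K S) {b : Fin n → ℝ}
    {σ ψ : E n ≃ₘ[ℝ] E n} (hσ : NullIsotopicRel S 1 σ) (hσK : ∀ᶠ p in 𝓝ˢ K, σ p = p + (b, 0, 0))
    {B₁ B₂ B₃ : E n → E n}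
    (hB : ContDiff ℝ ∞ B₁ ∧ ContDiff ℝ ∞ B₂ ∧ ContDiff ℝ ∞ B₃)
    (hBK : ∀ q ∉ K, B₁ q = 0 ∧ B₂ q = 0 ∧ B₃ q = 0)
    (hψ : ∀ q, ψ q = q + (B₁ q + B₂ q) + B₃ q)
    (hline₁ : ∀ τ ∈ Icc (0 : ℝ) 1, ∃ χ : E n ≃ₘ[ℝ] E n, ∀ q, χ q = q + τ • B₁ q)
    (hline₂ : ∀ τ ∈ Icc (0 : ℝ) 1, ∃ χ : E n ≃ₘ[ℝ] E n, ∀ q, χ q = q + (B₁ q + τ • B₂ q))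
    (hline₃ : ∀ τ ∈ Icc (0 : ℝ) 1, ∃ χ : E n ≃ₘ[ℝ] E n, ∀ q, χ q = q + (B₁ q + B₂ q + τ • B₃ q))
    (hnull₁ : ∀ (τ : ℝ) q, α₀ n (q + τ • B₁ q) (B₁ q) = 0)
    (hnull₂ : ∀ (τ : ℝ) q, α₀ n (q + B₁ q + τ • B₂ q) (B₂ q) = 0)
    (hnull₃ : ∀ (τ : ℝ) q, α₀ n (q + (B₁ q + B₂ q) + τ • B₃ q + (b, 0, 0)) (B₃ q) = 0) :
    NullIsotopicRel S 1 ψ := by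
  have hBS (q) (hq : q ∈ S) : B₁ q = 0 ∧ B₂ q = 0 ∧ B₃ q = 0 := hBK q (hKS.notMem_of_mem_right hq)
  obtain ⟨φ₁, hφ₁⟩ := hline₁ 1 (by simp)
  obtain ⟨φ₂, hφ₂⟩ := hline₂ 1 (by simp)
  simp only [one_smul] at hφ₁ hφ₂
  have h₁ : NullIsotopicRel S 1 φ₁ :=
    nullIsotopicRel_of_line hB.1 hline₁ hφ₁ (fun q hq => (hBS q hq).1) hnull₁
  have h₂ : NullIsotopicRel S φ₁ φ₂ := nullIsotopicRel_of_line hB.2.1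
    (by simpa only [hφ₁, add_assoc] using hline₂) (fun q => by rw [hφ₁, hφ₂, add_assoc])
    (fun q hq => (hBS q hq).2.1) (by simpa only [hφ₁] using hnull₂)
  have h₃ : NullIsotopicRel S φ₂ (σ * φ₂) := by
    simpa using hσ.mul_right (T := S) fun q hq => by simpa [hφ₂, hBS q hq] using hq
  have h₄ : NullIsotopicRel S (σ * φ₂) (σ * ψ) := nullIsotopicRel_mul_of_line hσK hB.2.2
    (by simpa only [hφ₂, add_assoc] using hline₃) (fun q => by rw [hφ₂, hψ])
    (fun q hq => by simp [hφ₂, hBK q hq]) (fun q hq => (hBK q hq).2.2)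
    (fun q hq => (hBS q hq).2.2) (by simpa only [hφ₂] using hnull₃)
  have h₅ : NullIsotopicRel S ψ (σ * ψ) := by
    simpa using hσ.mul_right (T := S) fun q hq => by simpa [hψ, hBS q hq] using hq
  -- The translation `σ` makes the third move null; afterwards it is undone.
  exact (((h₁.trans h₂).trans h₃).trans h₄).trans h₅.symm

theorem IsIsotopy.eventually_nullIsotopicRel [NeZero n] {Y : ℝ → E n ≃ₘ[ℝ] E n}
    (hY : IsIsotopy Y) {K S : Set (E n)} (hK : IsCompact K) (hS : IsClosed S)
    (hKS : Disjoint K S) (hYK : ∀ t, ∀ q ∉ K, Y t q = q) {s : ℝ} (hYs : Y s = 1) :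
    ∀ᶠ t in 𝓝 s, NullIsotopicRel S 1 (Y t) := by
  obtain ⟨b, hb, σ, hσ, hσK⟩ := exists_nullIsotopicRel_one_translation_near hK hS hKS
  obtain ⟨D₁, D₂, D₃, ⟨hD₁, hD₂, hD₃⟩, hD0, hsum, hnull₁, hnull₂, hnull₃⟩ :=
    exists_null_decomposition hb
  have hdisp : ContDiff ℝ ∞ fun z : ℝ × E n => Y z.1 z.2 - z.2 := ContDiff.sub hY contDiff_snd
  have hdispK : ∀ t, ∀ q ∉ K, Y t q - q = 0 := fun t q hq => by rw [hYK t q hq, sub_self]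
  have hdisps : ∀ q, Y s q - q = 0 := by simp [hYs]
  have hD {D : E n → E n → E n} (h : ContDiff ℝ ∞ (uncurry D)) :
      ContDiff ℝ ∞ fun z : ℝ × E n × E n => D z.2.1 z.2.2 := h.comp contDiff_snd
  have line (D) := eventually_forall_mem_Icc_exists_diffeo_eq_id_add hK hdisp hdispK hdisps (D := D)
  filter_upwards [
    line (fun z => z.1 • D₁ z.2.1 z.2.2) (contDiff_fst.smul (hD hD₁)) (by simp [hD0]),
    line (fun z => D₁ z.2.1 z.2.2 + z.1 • D₂ z.2.1 z.2.2)
      ((hD hD₁).add (contDiff_fst.smul (hD hD₂))) (by simp [hD0]),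
    line (fun z => D₁ z.2.1 z.2.2 + D₂ z.2.1 z.2.2 + z.1 • D₃ z.2.1 z.2.2)
      (((hD hD₁).add (hD hD₂)).add (contDiff_fst.smul (hD hD₃))) (by simp [hD0])]
    with t hline₁ hline₂ hline₃
  have hB {D : E n → E n → E n} (h : ContDiff ℝ ∞ (uncurry D)) :
      ContDiff ℝ ∞ fun q => D q (Y t q - q) :=
    h.comp (contDiff_id.prodMk ((Y t).contDiff.sub contDiff_id))
  exact nullIsotopicRel_one_of_lines hKS hσ hσK ⟨hB hD₁, hB hD₂, hB hD₃⟩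
    (fun q hq => by simp [hdispK t q hq, hD0]) (fun q => by rw [add_assoc, hsum, add_sub_cancel])
    hline₁ hline₂ hline₃ (fun τ q => hnull₁ τ q _) (fun τ q => hnull₂ τ q _)
    (fun τ q => hnull₃ τ q _)

theorem IsIsotopy.nullIsotopicRel [NeZero n] {Y : ℝ → E n ≃ₘ[ℝ] E n}
    (hY : IsIsotopy Y) {K S : Set (E n)} (hK : IsCompact K) (hS : IsClosed S)
    (hKS : Disjoint K S) (hYK : ∀ s t, EqOn (Y s) (Y t) Kᶜ) (s t : ℝ) :
    NullIsotopicRel S (Y s) (Y t) := by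
  refine isPreconnected_univ.induction₂ (fun s t => NullIsotopicRel S (Y s) (Y t)) (fun s _ => ?_)
    (fun _ _ _ _ _ _ => .trans) (fun _ _ _ _ => .symm) (mem_univ s) (mem_univ t)
  have hY' : IsIsotopy fun t => Y t * (Y s)⁻¹ := hY.mul (isIsotopy_const _)
  have hfix : ∀ t, ∀ q ∉ Y s '' K, (Y t * (Y s)⁻¹) q = q := fun t q hq => by
    have hqK : (Y s)⁻¹ q ∈ Kᶜ := fun h => hq ⟨_, h, diffeo_apply_inv_self _ q⟩
    rw [diffeo_mul_apply, hYK t s hqK, diffeo_apply_inv_self]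
  rw [nhdsWithin_univ]
  filter_upwards [hY'.eventually_nullIsotopicRel (hK.image (Y s).continuous)
    ((Y s).toHomeomorph.isClosedMap S hS) (disjoint_image_of_injective (Y s).injective hKS) hfix
    (mul_inv_cancel (Y s))] with t ht
  simpa using ht.mul_right (mapsTo_image (Y s) S)

end NullIsotopies

section Approximation

variable {n : ℕ} [NeZero n]

theorem exists_nullIsotopicRel_of_eqOn_ball {H h : E n ≃ₘ[ℝ] E n} (hH : H =ᶠ[cobounded (E n)] id)
    (hh : h =ᶠ[cobounded (E n)] id) {c : E n} {r r' : ℝ} (hr : 0 < r) (hr' : r' < r)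
    (hhH : EqOn h H (ball c r)) {B : Set (E n)} (hB : IsBounded B) :
    ∃ H' : E n ≃ₘ[ℝ] E n, H' =ᶠ[cobounded (E n)] id ∧ EqOn H' h B ∧
      NullIsotopicRel (closedBall c r') H H' := by
  have hφ : EqOn (H⁻¹ * h) id (ball c r) := fun q hq => by simp [hhH hq]
  have hφfar : (H⁻¹ * h) =ᶠ[cobounded (E n)] id := by
    filter_upwards [hH, hh] with q hHq hhq
    simp_all [diffeo_inv_apply_eq_self hHq]
  obtain ⟨Y, hY, hY0, hY1, A, hA⟩ := exists_isotopy_of_eqOn_id_ball hr hφ hφfar hB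
  refine ⟨H * Y 1, ?_, fun q hq => by simp [hY1 hq], ?_⟩
  · filter_upwards [hH, isBounded_def.1 (isBounded_closedBall (x := c) (r := A))] with q hHq hq
    rw [diffeo_mul_apply, hA 1 q fun hqA => hq hqA.1, hHq]
  · have hdisj : Disjoint (closedBall c A \ ball c r) (closedBall c r') :=
      disjoint_sdiff_left.mono_right (closedBall_subset_ball hr')
    simpa [hY0] using ((isIsotopy_const H).mul hY).nullIsotopicRel
      ((isCompact_closedBall c A).diff isOpen_ball) isClosed_closedBall hdisj
      (fun s t q hq => by simp [hA s q hq, hA t q hq]) 0 1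

theorem exists_nullIsotopicRel_eqOn_succ {f : E n → E n}
    (hf : ∀ R, ∃ h : E n ≃ₘ[ℝ] E n, h =ᶠ[cobounded (E n)] id ∧ EqOn h f (closedBall 0 R))
    {k : ℕ} {H : E n ≃ₘ[ℝ] E n} (hH : H =ᶠ[cobounded (E n)] id) (hHf : EqOn H f (ball 0 k)) :
    ∃ H' : E n ≃ₘ[ℝ] E n, H' =ᶠ[cobounded (E n)] id ∧ EqOn H' f (ball 0 (k + 1 : ℕ)) ∧
      NullIsotopicRel (ball 0 (k - 1)) H H' := by
  obtain ⟨h, hh, hhf⟩ := hf (k + 1 : ℕ)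
  suffices ∃ c r r', 0 < r ∧ r' < r ∧ EqOn h H (ball c r) ∧
      ball (0 : E n) (k - 1) ⊆ closedBall c r' by
    obtain ⟨c, r, r', hr, hr', hhH, hsub⟩ := this
    obtain ⟨H', hH', hH'h, hrel⟩ := exists_nullIsotopicRel_of_eqOn_ball hH hh hr hr' hhH
      (isBounded_ball (x := 0) (r := (k + 1 : ℕ)))
    exact ⟨H', hH', hH'h.trans (hhf.mono ball_subset_closedBall), hrel.mono hsub⟩
  rcases Nat.eq_zero_or_pos k with rfl | hk
  · obtain ⟨c, hc⟩ := exists_ball_subset_of_mem_cobounded (hh.and hH)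
    exact ⟨c, 1, 0, one_pos, one_pos, fun q hq => (hc hq).1.trans (hc hq).2.symm, by
      simp [ball_eq_empty.2]⟩
  · have hsub : ball (0 : E n) k ⊆ closedBall 0 (k + 1 : ℕ) :=
      ball_subset_closedBall.trans (closedBall_subset_closedBall (by simp))
    exact ⟨0, k, k - 1, by positivity, by linarith, (hhf.mono hsub).trans hHf.symm,
      ball_subset_closedBall⟩

theorem exists_nullIsotopicRel_seq {f : E n → E n}
    (hf : ∀ R, ∃ h : E n ≃ₘ[ℝ] E n, h =ᶠ[cobounded (E n)] id ∧ EqOn h f (closedBall 0 R)) :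
    ∃ H : ℕ → E n ≃ₘ[ℝ] E n, H 0 = 1 ∧ (∀ k, EqOn (H k) f (ball 0 k)) ∧
      ∀ k : ℕ, NullIsotopicRel (ball 0 (k - 1)) (H k) (H (k + 1)) := by
  choose! next hnext_far hnext_eqOn hnext_rel using
    fun (k : ℕ) H hH => exists_nullIsotopicRel_eqOn_succ hf (k := k) (H := H) hH
  let H : ℕ → E n ≃ₘ[ℝ] E n := Nat.rec 1 next
  have hH : ∀ k, H k =ᶠ[cobounded (E n)] id ∧ EqOn (H k) f (ball 0 k) := fun k => by
    induction k with
    | zero => exact ⟨.rfl, by simp⟩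
    | succ k ih => exact ⟨hnext_far k _ ih.1 ih.2, hnext_eqOn k _ ih.1 ih.2⟩
  exact ⟨H, rfl, fun k => (hH k).2, fun k => hnext_rel k _ (hH k).1 (hH k).2⟩

end Approximation

section InfiniteConcatenation

variable {n : ℕ}

/-- A sequence of null isotopies `P k` from `H k` to `H (k + 1)` that can be run one after the
other, `P k` during the time interval `(u k, u (k + 1))`. As `P k` is stationary on `V k`, their
infinite concatenation makes sense when the sets `V k` exhaust the space. -/
structure IsNullIsotopyChain (P : ℕ → ℝ → E n ≃ₘ[ℝ] E n) (H : ℕ → E n ≃ₘ[ℝ] E n) (u : ℕ → ℝ)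
    (V : ℕ → Set (E n)) : Prop where
  isNullIsotopy : ∀ k, IsNullIsotopy (P k)
  monotone_time : Monotone u
  eq_left : ∀ k, ∃ a > u k, ∀ t ≤ a, P k t = H k
  eq_right : ∀ k, ∀ t ≥ u (k + 1), P k t = H (k + 1)
  monotone_set : Monotone V
  eqOn : ∀ k t, EqOn (P k t) (H k) (V k)

/-- The concatenation of the first `k` isotopies of a chain. -/
def concatFirst (P : ℕ → ℝ → E n ≃ₘ[ℝ] E n) (H : ℕ → E n ≃ₘ[ℝ] E n) : ℕ → ℝ → E n ≃ₘ[ℝ] E n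
  | 0, _ => H 0
  | k + 1, t => P k t * (H k)⁻¹ * concatFirst P H k t

namespace IsNullIsotopyChain

variable {P : ℕ → ℝ → E n ≃ₘ[ℝ] E n} {H : ℕ → E n ≃ₘ[ℝ] E n} {u : ℕ → ℝ} {V : ℕ → Set (E n)}

theorem concatFirst_of_ge (hP : IsNullIsotopyChain P H u V) :
    ∀ k, ∀ t ≥ u k, concatFirst P H k t = H k
  | 0, _, _ => rfl
  | k + 1, t, ht => by
    rw [concatFirst, hP.eq_right k t ht,
      hP.concatFirst_of_ge k t ((hP.monotone_time k.le_succ).trans ht), inv_mul_cancel_right]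

theorem isNullIsotopy_concatFirst (hP : IsNullIsotopyChain P H u V) :
    ∀ k, IsNullIsotopy (concatFirst P H k)
  | 0 => ⟨isIsotopy_const _, fun t q => by simp [concatFirst, α₀_zero]⟩
  | k + 1 => by
    obtain ⟨a, ha, hPa⟩ := hP.eq_left k
    exact (hP.isNullIsotopy_concatFirst k).concat (hP.isNullIsotopy k) ha
      (hP.concatFirst_of_ge k) hPa

theorem concatFirst_eq_of_le (hP : IsNullIsotopyChain P H u V) {j k : ℕ} (hkj : k ≤ j) {t : ℝ}
    (ht : t ≤ u k) : concatFirst P H j t = concatFirst P H k t := by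
  induction j, hkj using Nat.le_induction with
  | base => rfl
  | succ j hkj ih =>
    obtain ⟨a, ha, hPa⟩ := hP.eq_left j
    rw [concatFirst, hPa t ((ht.trans (hP.monotone_time hkj)).trans ha.le), mul_inv_cancel,
      one_mul, ih]

theorem concatFirst_eqOn (hP : IsNullIsotopyChain P H u V) {j k : ℕ} (hkj : k ≤ j) (t : ℝ) :
    EqOn (concatFirst P H j t) (concatFirst P H k t) (V k) := by
  induction j, hkj using Nat.le_induction with
  | base => exact eqOn_refl _ _
  | succ j hkj ih =>
    rcases le_total t (u j) with ht | ht
    · rwa [hP.concatFirst_eq_of_le j.le_succ ht]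
    · have hstat : EqOn (concatFirst P H (j + 1) t) (concatFirst P H j t) (V j) := by
        rw [concatFirst, hP.concatFirst_of_ge j t ht, inv_mul_cancel_right]
        exact hP.eqOn j t
      exact (hstat.mono (hP.monotone_set hkj)).trans ih

theorem exists_limit (hP : IsNullIsotopyChain P H u V) (hV : ⋃ k, V k = univ) :
    ∃ g : ℝ × E n → E n, ∀ k t, ∀ q ∈ V k, g (t, q) = concatFirst P H k t q := by
  choose κ hκ using iUnion_eq_univ_iff.1 hV
  refine ⟨fun z => concatFirst P H (κ z.2) z.1 z.2, fun k t q hq => ?_⟩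
  rcases le_total k (κ q) with hle | hle
  · exact hP.concatFirst_eqOn hle t hq
  · exact (hP.concatFirst_eqOn hle t (hκ q)).symm

theorem exists_null_path (hP : IsNullIsotopyChain P H u V) (hu0 : 0 ≤ u 0)
    (hu_lt : ∀ k, u k < 1) (hu1 : Tendsto u atTop (𝓝 1)) (hVo : ∀ k, IsOpen (V k))
    (hV : ⋃ k, V k = univ) {f : E n ≃ₘ[ℝ] E n} (hf : ∀ k, EqOn (H k) f (V k)) :
    ∃ g : ℝ × E n → E n, IsSmoothPath n g ∧ IsNullPath n g ∧
      (∀ q, g (0, q) = H 0 q) ∧ ∀ q, g (1, q) = f q := by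
  obtain ⟨g, hg⟩ := hP.exists_limit hV
  have hcover : ∀ q, ∃ k, q ∈ V k := iUnion_eq_univ_iff.1 hV
  have hg1 : ∀ q, g (1, q) = f q := fun q => by
    obtain ⟨k, hq⟩ := hcover q
    rw [hg k 1 q hq, hP.concatFirst_of_ge k 1 (hu_lt k).le, hf k hq]
  have hgle : ∀ {k t}, t ≤ u k → ∀ q, g (t, q) = concatFirst P H k t q := fun {k t} ht q => by
    obtain ⟨j, hq⟩ := hcover q
    rw [hg (max j k) t q (hP.monotone_set (le_max_left j k) hq),
      hP.concatFirst_eq_of_le (le_max_right j k) ht]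
  refine ⟨g, ⟨?_, fun t ht => ?_⟩, fun t _ q => ?_, hgle hu0, hg1⟩
  · refine contDiff_iff_contDiffAt.2 fun ⟨t, q⟩ => ?_
    obtain ⟨k, hq⟩ := hcover q
    refine (hP.isNullIsotopy_concatFirst k).isIsotopy.contDiffAt.congr_of_eventuallyEq ?_
    filter_upwards [continuousAt_snd.preimage_mem_nhds ((hVo k).mem_nhds hq)] with z hz
    exact hg k z.1 z.2 hz
  · refine isDiffeo_iff_exists_diffeo.2 ?_
    rcases ht.2.eq_or_lt with rfl | ht1
    · exact ⟨f, funext fun q => (hg1 q).symm⟩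
    · obtain ⟨k, hk⟩ := (hu1.eventually_const_le ht1).exists
      exact ⟨concatFirst P H k t, funext fun q => (hgle hk q).symm⟩
  · obtain ⟨k, hq⟩ := hcover q
    exact (hP.isNullIsotopy_concatFirst k).null_of_eventuallyEq (.of_forall fun s => hg k s q hq)

end IsNullIsotopyChain

theorem exists_null_path_of_nullIsotopicRel_seq {H : ℕ → E n ≃ₘ[ℝ] E n} {V : ℕ → Set (E n)}
    (hH : ∀ k, NullIsotopicRel (V k) (H k) (H (k + 1))) (hVmono : Monotone V)
    (hVo : ∀ k, IsOpen (V k)) (hV : ⋃ k, V k = univ)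
    {f : E n ≃ₘ[ℝ] E n} (hf : ∀ k, EqOn (H k) f (V k)) :
    ∃ g : ℝ × E n → E n, IsSmoothPath n g ∧ IsNullPath n g ∧
      (∀ q, g (0, q) = H 0 q) ∧ ∀ q, g (1, q) = f q := by
  obtain ⟨u, hu, hu01, hu1⟩ := exists_seq_strictMono_tendsto' (zero_lt_one' ℝ)
  choose a ha using fun k : ℕ => exists_between (hu k.lt_succ_self)
  choose P hPnull hPa hPu hPV using fun k => (hH k).exists_reparam (ha k).2
  have hchain : IsNullIsotopyChain P H u V :=
    ⟨hPnull, hu.monotone, fun k => ⟨a k, (ha k).1, hPa k⟩, hPu, hVmono, hPV⟩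
  exact hchain.exists_null_path (hu01 0).1.le (fun k => (hu01 k).2) hu1 hVo hV hf

end InfiniteConcatenation

/-- Every diffeomorphism of `ℝ^{2n+1}` (standard contact structure) that is
connected to the identity by a smooth path of diffeomorphisms is connected to the identity by a
null path of diffeomorphisms. -/
theorem null_path_to_any_diffeo (n : ℕ) (hn : 1 ≤ n) (f : E n → E n)
    (hf : IsDiffeo n f) (hconn : ConnToId n f) :
    ∃ g : ℝ × E n → E n, IsSmoothPath n g ∧ IsNullPath n g ∧
      (∀ p, g (0, p) = p) ∧ (∀ p, g (1, p) = f p) := by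
  have : NeZero n := ⟨Nat.one_le_iff_ne_zero.1 hn⟩
  obtain ⟨f, rfl⟩ := isDiffeo_iff_exists_diffeo.1 hf
  obtain ⟨g, hg, hg0, hg1⟩ := hconn
  obtain ⟨Y, hY, hYg⟩ := hg.exists_isotopy
  have happrox (R : ℝ) : ∃ h : E n ≃ₘ[ℝ] E n, h =ᶠ[cobounded (E n)] id ∧
      EqOn h f (closedBall 0 R) := by
    obtain ⟨h, hh, hhY⟩ := hY.exists_diffeo_eqOn_compact (isCompact_closedBall 0 R) 0 1
    exact ⟨h, hh, by simpa [EqOn, hYg, hg0, hg1] using hhY⟩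
  obtain ⟨H, hH0, hHf, hHrel⟩ := exists_nullIsotopicRel_seq happrox
  have hmono : Monotone fun k : ℕ => ball (0 : E n) ((k : ℝ) - 1) :=
    fun j k hjk => ball_subset_ball (by gcongr)
  have hcover : ⋃ k : ℕ, ball (0 : E n) ((k : ℝ) - 1) = univ := iUnion_eq_univ_iff.2 fun q =>
    (exists_nat_gt (dist q 0 + 1)).imp fun k hk => mem_ball.2 (lt_sub_iff_add_lt.2 hk)
  simpa [hH0] using exists_null_path_of_nullIsotopicRel_seq hHrel hmono (fun _ => isOpen_ball)
    hcover fun k => (hHf k).mono (ball_subset_ball (sub_le_self _ one_pos.le))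
end
end

section
/- Let n ≥ 1 and let f : ℝ^{2n+1} → ℝ^{2n+1} be a diffeomorphism that is connected to the identity by a smooth path of diffeomorphisms. Then there exists a positive smooth path of diffeomorphisms (g_t)_{t∈[0,1]} of ℝ^{2n+1} with g_0 = id and g_1 = f. -/
open Set Function

noncomputable section

open Filter Metric
open scoped ContDiff Manifold NNReal Topology

/-! Compose the given path `h` from `id` to `f` with a loop `ℓ` of diffeomorphisms based at `id`,
taking `g_t = ℓ_t ∘ h_t`. The loop is `C¹`-close to `id`, so `α₀(ġ) = α₀(∂ₜℓ) + α₀(Dℓ·ḣ)` with a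
second term bounded in terms of `ḣ`, hence, the track `(t, q) ↦ (t, h_t q)` being proper on
`[0,1] × ℝ^{2n+1}`, by a continuous function of the position `h_t q` alone. It remains to make
`α₀(∂ₜℓ)` larger than any prescribed such function. Rotating along a circle of radius `a` in an
`(xᵢ, yᵢ)`-plane at angular frequency `ω`, with a suitable `z`-component, gives
`α₀(∂ₜℓ) = a²ω/2`: take `a` small and `ω` huge. Closing the loop forces `ω ∈ 2πℤ`, so `ω` can only
jump where `a = 0`. Hence two rotations are superposed, whose amplitudes live on two families of
slabs covering the space; the interaction of the two is absorbed by making the second much faster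
than the first. -/

/-! ### Smooth majorants, properness and perturbations of the identity -/

theorem exists_contDiff_majorant {F X : Type*} [NormedAddCommGroup F] [NormedSpace ℝ F]
    [FiniteDimensional ℝ F] {π : X → F} {f : X → ℝ}
    (hf : ∀ R, ∃ C, ∀ x, ‖π x‖ ≤ R → f x ≤ C) :
    ∃ K : F → ℝ, ContDiff ℝ ∞ K ∧ ∀ x, f x ≤ K (π x) := by
  let S : F → Set ℝ := fun p => {c | ∀ x, π x = p → f x ≤ c}
  have convex_S (p : F) : Convex ℝ (S p) := by
    have : S p = ⋂ x, ⋂ (_ : π x = p), Ici (f x) := by ext; simp [S]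
    rw [this]
    exact convex_iInter fun x => convex_iInter fun _ => convex_Ici _
  have locally_const (p : F) : ∃ c, ∀ᶠ q in 𝓝 p, c ∈ S q := by
    obtain ⟨C, hC⟩ := hf (‖p‖ + 1)
    refine ⟨C, (continuous_norm.continuousAt.eventually_le_const (lt_add_one ‖p‖)).mono ?_⟩
    rintro _ hq x rfl
    exact hC x hq
  obtain ⟨K, hK⟩ := exists_contMDiffMap_forall_mem_convex_of_local_const (n := ⊤) 𝓘(ℝ, F)
    convex_S locally_const
  exact ⟨K, K.contMDiff.contDiff, fun x => hK _ x rfl⟩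

theorem isCompact_preimage_of_injOn_of_nhds_le_map {X Y : Type*} [TopologicalSpace X]
    [TopologicalSpace Y] {Φ : X → Y} {K : Set Y} (hK : IsCompact K) (hrange : K ⊆ range Φ)
    (hinj : InjOn Φ (Φ ⁻¹' K)) (hnhds : ∀ x ∈ Φ ⁻¹' K, 𝓝 (Φ x) ≤ map Φ (𝓝 x)) :
    IsCompact (Φ ⁻¹' K) := by
  refine isCompact_iff_ultrafilter_le_nhds.2 fun 𝒰 h𝒰 => ?_
  obtain ⟨y, hy, hlim⟩ := isCompact_iff_ultrafilter_le_nhds.1 hK (𝒰.map Φ)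
    (by simpa [Filter.tendsto_principal] using h𝒰)
  obtain ⟨x, rfl⟩ := hrange hy
  refine ⟨x, hy, fun N hN => ?_⟩
  have image_mem : Φ ⁻¹' (Φ '' N) ∈ 𝒰 := hlim (hnhds x hy (image_mem_map hN))
  filter_upwards [image_mem, le_principal_iff.1 h𝒰] with z ⟨x', hx', hΦ⟩ hz
  have hx'K : x' ∈ Φ ⁻¹' K := by rwa [mem_preimage, hΦ]
  exact hinj hx'K hz hΦ ▸ hx'

theorem exists_contDiff_inverse_id_add {F : Type*} [NormedAddCommGroup F] [NormedSpace ℝ F]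
    [CompleteSpace F] {r : F → F} {c : ℝ≥0} (hc : c < 1) (hr : ContDiff ℝ ∞ r)
    (hbound : ∀ p, ‖fderiv ℝ r p‖ ≤ c) :
    ∃ g : F → F, ContDiff ℝ ∞ g ∧ LeftInverse g (fun p => p + r p) ∧
      RightInverse g (fun p => p + r p) := by
  have hdiff : Differentiable ℝ r := hr.differentiable (by simp)
  have hlip : LipschitzWith c r := lipschitzWith_of_nnnorm_fderiv_le hdiff hbound
  have happrox : ApproximatesLinearOn (fun p => p + r p)
      (ContinuousLinearEquiv.refl ℝ F : F →L[ℝ] F) univ c := fun x _ y _ => by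
    simpa [add_sub_add_comm, dist_eq_norm] using hlip.dist_le_mul x y
  have hinv : Subsingleton F ∨ c < ‖((ContinuousLinearEquiv.refl ℝ F).symm : F →L[ℝ] F)‖₊⁻¹ := by
    rcases subsingleton_or_nontrivial F with hF | hF
    · exact Or.inl hF
    · right
      simpa using hc
  let H : F ≃ₜ F := happrox.toHomeomorph _ hinv
  have norm_neg_lt (p : F) : ‖-fderiv ℝ r p‖ < 1 := by
    rw [norm_neg]
    exact (hbound p).trans_lt (by exact_mod_cast hc)
  let D (p : F) : F ≃L[ℝ] F :=
    ContinuousLinearEquiv.unitsEquiv ℝ F (Units.oneSub (-fderiv ℝ r p) (norm_neg_lt p))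
  have hasFDerivAt_H (p : F) : HasFDerivAt H (D p : F →L[ℝ] F) p := by
    have hD : (D p : F →L[ℝ] F) = ContinuousLinearMap.id ℝ F + fderiv ℝ r p := by
      ext v
      simp [D]
    rw [hD]
    exact (hasFDerivAt_id p).add (hdiff p).hasFDerivAt
  exact ⟨H.symm, H.contDiff_symm hasFDerivAt_H (contDiff_id.add hr), H.symm_apply_apply,
    H.apply_symm_apply⟩

/-! ### Paths of diffeomorphisms -/

variable {n : ℕ}

theorem α₀_add (p v w : E n) : α₀ n p (v + w) = α₀ n p v + α₀ n p w := by
  simp only [α₀, Prod.snd_add, Prod.fst_add, Pi.add_apply, mul_add, Finset.sum_add_distrib]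
  ring

theorem abs_α₀_le (p v : E n) : |α₀ n p v| ≤ (1 + n * ‖p‖) * ‖v‖ := by
  have hterm (j : Fin n) : |p.1 j * v.2.1 j| ≤ ‖p‖ * ‖v‖ := by
    rw [abs_mul]
    exact mul_le_mul ((norm_le_pi_norm p.1 j).trans (norm_fst_le p))
      ((norm_le_pi_norm v.2.1 j).trans ((norm_fst_le v.2).trans (norm_snd_le v)))
      (abs_nonneg _) (norm_nonneg _)
  calc |α₀ n p v| ≤ |v.2.2| + ∑ j, |p.1 j * v.2.1 j| :=
        (abs_add_le _ _).trans (add_le_add_right (Finset.abs_sum_le_sum_abs _ _) _)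
    _ ≤ ‖v‖ + ∑ _j : Fin n, ‖p‖ * ‖v‖ := by
        gcongr with j
        · exact (norm_snd_le v.2).trans (norm_snd_le v)
        · exact hterm j
    _ = (1 + n * ‖p‖) * ‖v‖ := by
        rw [Finset.sum_const, Finset.card_univ, Fintype.card_fin, nsmul_eq_mul]
        ring

theorem isDiffeo_id_add {r : E n → E n} {c : ℝ} (hc : c < 1) (hr : ContDiff ℝ ∞ r)
    (hbound : ∀ p, ‖fderiv ℝ r p‖ ≤ c) : IsDiffeo n (fun p => p + r p) := by
  lift c to ℝ≥0 using (norm_nonneg _).trans (hbound 0)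
  exact ⟨contDiff_id.add hr, exists_contDiff_inverse_id_add (by exact_mod_cast hc) hr hbound⟩

theorem IsDiffeo.comp {f g : E n → E n} (hf : IsDiffeo n f) (hg : IsDiffeo n g) :
    IsDiffeo n (fun p => f (g p)) := by
  obtain ⟨hf, f', hf', hf'f, hff'⟩ := hf
  obtain ⟨hg, g', hg', hg'g, hgg'⟩ := hg
  exact ⟨hf.comp hg, g' ∘ f', hg'.comp hf', hf'f.comp hg'g, hff'.comp hgg'⟩

theorem IsDiffeo.bijective {f : E n → E n} (hf : IsDiffeo n f) : Bijective f :=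
  let ⟨_, _, _, hleft, hright⟩ := hf
  ⟨hleft.injective, hright.surjective⟩

theorem IsDiffeo.surjective_fderiv {f : E n → E n} (hf : IsDiffeo n f) (q : E n) :
    Surjective (fderiv ℝ f q) := by
  obtain ⟨hf, k, hk, hkf, hfk⟩ := hf
  have hcomp : (fderiv ℝ f q).comp (fderiv ℝ k (f q)) = ContinuousLinearMap.id ℝ (E n) := by
    have := fderiv_comp (f q) (hf.differentiable (by simp) (k (f q)))
      (hk.differentiable (by simp) (f q))
    rwa [hfk.comp_eq_id, fderiv_id, hkf q, eq_comm] at this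
  exact fun v => ⟨fderiv ℝ k (f q) v, DFunLike.congr_fun hcomp v⟩

theorem IsSmoothPath.comp {ℓ h : ℝ × E n → E n} (hℓ : IsSmoothPath n ℓ) (hh : IsSmoothPath n h) :
    IsSmoothPath n (fun x => ℓ (x.1, h x)) :=
  ⟨hℓ.1.comp (contDiff_fst.prodMk hh.1), fun t ht => (hℓ.2 t ht).comp (hh.2 t ht)⟩

theorem hasDerivAt_path {h : ℝ × E n → E n} {t : ℝ} {q : E n} (hh : DifferentiableAt ℝ h (t, q)) :
    HasDerivAt (fun s => h (s, q)) (fderiv ℝ h (t, q) (1, 0)) t :=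
  hh.hasFDerivAt.comp_hasDerivAt t ((hasDerivAt_id t).prodMk (hasDerivAt_const t q))

theorem fderiv_slice_apply {h : ℝ × E n → E n} {t : ℝ} {q : E n}
    (hh : DifferentiableAt ℝ h (t, q)) (v : E n) :
    fderiv ℝ (fun p => h (t, p)) q v = fderiv ℝ h (t, q) (0, v) :=
  DFunLike.congr_fun (hh.hasFDerivAt.comp q (hasFDerivAt_prodMk_right t q)).fderiv v

theorem pathDeriv_comp {ℓ h : ℝ × E n → E n} {t : ℝ} {q : E n}
    (hℓ : DifferentiableAt ℝ ℓ (t, h (t, q))) (hh : DifferentiableAt ℝ h (t, q)) :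
    pathDeriv n (fun x => ℓ (x.1, h x)) t q =
      pathDeriv n ℓ t (h (t, q)) + fderiv ℝ (fun p => ℓ (t, p)) (h (t, q)) (pathDeriv n h t q) := by
  have hcomp : HasDerivAt (fun s => ℓ (s, h (s, q)))
      (fderiv ℝ ℓ (t, h (t, q)) (1, fderiv ℝ h (t, q) (1, 0))) t :=
    hℓ.hasFDerivAt.comp_hasDerivAt t ((hasDerivAt_id t).prodMk (hasDerivAt_path hh))
  simp only [pathDeriv]
  rw [hcomp.deriv, (hasDerivAt_path hℓ).deriv, (hasDerivAt_path hh).deriv, fderiv_slice_apply hℓ,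
    ← map_add, Prod.mk_add_mk, add_zero, zero_add]

theorem IsSmoothPath.map_nhds_track {h : ℝ × E n → E n} (hh : IsSmoothPath n h) {x : ℝ × E n}
    (hx : x.1 ∈ Icc (0 : ℝ) 1) :
    map (fun y : ℝ × E n => (y.1, h y)) (𝓝 x) = 𝓝 (x.1, h x) := by
  have hstrict : HasStrictFDerivAt (fun y : ℝ × E n => (y.1, h y))
      ((ContinuousLinearMap.fst ℝ ℝ (E n)).prod (fderiv ℝ h x)) x :=
    hasStrictFDerivAt_fst.prodMk (hh.1.contDiffAt.hasStrictFDerivAt (by simp))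
  refine hstrict.map_nhds_eq_of_surj (LinearMap.range_eq_top.2 ?_)
  rintro ⟨s, v⟩
  obtain ⟨u, hu⟩ := (hh.2 x.1 hx).surjective_fderiv x.2 (v - fderiv ℝ h x (s, 0))
  rw [fderiv_slice_apply (hh.1.differentiable (by simp) x)] at hu
  refine ⟨(s, u), Prod.ext rfl ?_⟩
  calc fderiv ℝ h x (s, u) = fderiv ℝ h x (s, 0) + fderiv ℝ h x (0, u) := by simp [← map_add]
    _ = v := by rw [hu, add_sub_cancel]

theorem IsSmoothPath.isCompact_preimage_closedBall {h : ℝ × E n → E n} (hh : IsSmoothPath n h)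
    (R : ℝ) : IsCompact {x : ℝ × E n | x.1 ∈ Icc (0 : ℝ) 1 ∧ ‖h x‖ ≤ R} := by
  let Φ : ℝ × E n → ℝ × E n := fun x => (x.1, h x)
  have hpre : {x : ℝ × E n | x.1 ∈ Icc (0 : ℝ) 1 ∧ ‖h x‖ ≤ R} =
      Φ ⁻¹' (Icc (0 : ℝ) 1 ×ˢ closedBall 0 R) := by
    ext
    simp [Φ]
  rw [hpre]
  refine isCompact_preimage_of_injOn_of_nhds_le_map
    (isCompact_Icc.prod (isCompact_closedBall 0 R)) ?_ ?_
    fun x hx => (hh.map_nhds_track (x := x) hx.1).ge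
  · rintro ⟨t, p⟩ ⟨ht, -⟩
    obtain ⟨q, hq⟩ := (hh.2 t ht).bijective.surjective p
    exact ⟨(t, q), Prod.ext rfl hq⟩
  · rintro ⟨t, q⟩ ⟨ht, -⟩ ⟨_, q'⟩ - heq
    obtain ⟨rfl, hq⟩ := Prod.ext_iff.1 heq
    exact Prod.ext rfl ((hh.2 t ht).bijective.injective hq)

theorem IsSmoothPath.exists_norm_pathDeriv_le {h : ℝ × E n → E n} (hh : IsSmoothPath n h) :
    ∃ K : E n → ℝ, Continuous K ∧
      ∀ t ∈ Icc (0 : ℝ) 1, ∀ q, ‖pathDeriv n h t q‖ ≤ K (h (t, q)) := by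
  have hderiv (x : ℝ × E n) : pathDeriv n h x.1 x.2 = fderiv ℝ h x (1, 0) :=
    (hasDerivAt_path (hh.1.differentiable (by simp) x)).deriv
  have hcont : Continuous fun x => fderiv ℝ h x (1, 0) :=
    (hh.1.continuous_fderiv (by simp)).clm_apply continuous_const
  obtain ⟨K, hK, hle⟩ := exists_contDiff_majorant
    (X := {x : ℝ × E n // x.1 ∈ Icc (0 : ℝ) 1}) (π := fun x => h x)
    (f := fun x => ‖pathDeriv n h x.1.1 x.1.2‖) fun R => by
      obtain ⟨C, hC⟩ := (hh.isCompact_preimage_closedBall R).exists_bound_of_continuousOn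
        hcont.continuousOn
      exact ⟨C, fun x hx => (hderiv x).symm ▸ hC x ⟨x.2, hx⟩⟩
  exact ⟨K, hK.continuous, fun t ht q => hle ⟨(t, q), ht⟩⟩

/-! ### Oscillators -/

section C1BoundAt

variable {F G H : Type*} [NormedAddCommGroup F] [NormedSpace ℝ F] [NormedAddCommGroup G]
  [NormedSpace ℝ G] [NormedAddCommGroup H] [NormedSpace ℝ H]

theorem norm_smul_le_mul {k c d : ℝ} {v : G} (hk : ‖k‖ ≤ c) (hv : ‖v‖ ≤ d) : ‖k • v‖ ≤ c * d := by
  rw [norm_smul]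
  exact mul_le_mul hk hv (norm_nonneg _) ((norm_nonneg _).trans hk)

/-- `f` is differentiable at `x` and its `C¹` size there, the larger of `‖f x‖` and `‖Df(x)‖`, is at
most `c`. -/
structure C1BoundAt (f : F → G) (c : ℝ) (x : F) : Prop where
  differentiableAt : DifferentiableAt ℝ f x
  norm_le : ‖f x‖ ≤ c
  norm_fderiv_le : ‖fderiv ℝ f x‖ ≤ c

namespace C1BoundAt

variable {f g : F → G} {c d : ℝ} {x : F}

theorem mono (hf : C1BoundAt f c x) (hcd : c ≤ d) : C1BoundAt f d x :=
  ⟨hf.differentiableAt, hf.norm_le.trans hcd, hf.norm_fderiv_le.trans hcd⟩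

theorem neg (hf : C1BoundAt f c x) : C1BoundAt (fun y => -f y) c x := by
  refine ⟨hf.differentiableAt.fun_neg, ?_, ?_⟩
  · simpa using hf.norm_le
  · simpa [fderiv_fun_neg] using hf.norm_fderiv_le

theorem add (hf : C1BoundAt f c x) (hg : C1BoundAt g d x) :
    C1BoundAt (fun y => f y + g y) (c + d) x := by
  refine ⟨hf.differentiableAt.fun_add hg.differentiableAt,
    norm_add_le_of_le hf.norm_le hg.norm_le, ?_⟩
  rw [fderiv_fun_add hf.differentiableAt hg.differentiableAt]
  exact norm_add_le_of_le hf.norm_fderiv_le hg.norm_fderiv_le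

theorem sub (hf : C1BoundAt f c x) (hg : C1BoundAt g d x) :
    C1BoundAt (fun y => f y - g y) (c + d) x := by
  simpa only [sub_eq_add_neg] using hf.add hg.neg

theorem mul {f g : F → ℝ} (hf : C1BoundAt f c x) (hg : C1BoundAt g d x) :
    C1BoundAt (fun y => f y * g y) (2 * (c * d)) x := by
  have hc : 0 ≤ c := (norm_nonneg _).trans hf.norm_le
  have hd : 0 ≤ d := (norm_nonneg _).trans hg.norm_le
  refine ⟨hf.differentiableAt.fun_mul hg.differentiableAt, ?_, ?_⟩
  · calc ‖f x * g x‖ ≤ c * d := norm_mul_le_of_le hf.norm_le hg.norm_le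
      _ ≤ 2 * (c * d) := le_mul_of_one_le_left (mul_nonneg hc hd) one_le_two
  · rw [fderiv_fun_mul hf.differentiableAt hg.differentiableAt]
    calc ‖f x • fderiv ℝ g x + g x • fderiv ℝ f x‖ ≤ c * d + d * c :=
          norm_add_le_of_le (norm_smul_le_mul hf.norm_le hg.norm_fderiv_le)
            (norm_smul_le_mul hg.norm_le hf.norm_fderiv_le)
      _ = 2 * (c * d) := by ring

theorem const_smul (hf : C1BoundAt f c x) (k : ℝ) :
    C1BoundAt (fun y => k • f y) (‖k‖ * c) x := by
  refine ⟨hf.differentiableAt.fun_const_smul k, norm_smul_le_mul le_rfl hf.norm_le, ?_⟩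
  rw [fderiv_fun_const_smul hf.differentiableAt]
  exact norm_smul_le_mul le_rfl hf.norm_fderiv_le

theorem prodMk {g : F → H} (hf : C1BoundAt f c x) (hg : C1BoundAt g c x) :
    C1BoundAt (fun y => (f y, g y)) c x := by
  refine ⟨hf.differentiableAt.prodMk hg.differentiableAt,
    norm_prod_le_iff.2 ⟨hf.norm_le, hg.norm_le⟩, ?_⟩
  rw [hf.differentiableAt.fderiv_prodMk hg.differentiableAt, ContinuousLinearMap.opNorm_prod]
  exact norm_prod_le_iff.2 ⟨hf.norm_fderiv_le, hg.norm_fderiv_le⟩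

theorem clm_comp (hf : C1BoundAt f c x) {L : G →L[ℝ] H} (hL : ‖L‖ ≤ 1) :
    C1BoundAt (fun y => L (f y)) c x := by
  refine ⟨L.differentiableAt.comp x hf.differentiableAt, ?_, ?_⟩
  · exact (L.le_of_opNorm_le hL _).trans (by simpa using hf.norm_le)
  · rw [fderiv_fun_comp x L.differentiableAt hf.differentiableAt, L.fderiv]
    calc ‖L.comp (fderiv ℝ f x)‖ ≤ ‖L‖ * ‖fderiv ℝ f x‖ := L.opNorm_comp_le _
      _ ≤ 1 * c := by gcongr; exact hf.norm_fderiv_le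
      _ = c := one_mul c

theorem norm_fderiv_id_add_le {r : F → F} (hr : C1BoundAt r c x) :
    ‖fderiv ℝ (fun y => y + r y) x‖ ≤ 1 + c := by
  rw [fderiv_fun_add differentiableAt_fun_id hr.differentiableAt]
  exact norm_add_le_of_le (by simpa using ContinuousLinearMap.norm_id_le) hr.norm_fderiv_le

end C1BoundAt

end C1BoundAt

section Oscillator

variable {F : Type*} [NormedAddCommGroup F] [NormedSpace ℝ F]

/-- An amplitude and an integer number of turns per unit of time at each point of `F`. The turns may
jump, but only across regions where the amplitude vanishes, so that the resulting oscillation is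
smooth. -/
structure Oscillator (F : Type*) [NormedAddCommGroup F] [NormedSpace ℝ F] where
  amp : F → ℝ
  turns : F → ℕ
  contDiff_amp : ContDiff ℝ ∞ amp
  turns_eventually (p : F) : ∀ᶠ q in 𝓝 p, amp q = 0 ∨ turns q = turns p

namespace Oscillator

variable (O : Oscillator F) {ψ : ℝ → ℝ}

/-- The angular frequency of an oscillator. -/
def freq (p : F) : ℝ := 2 * Real.pi * O.turns p

theorem freq_nonneg (p : F) : 0 ≤ O.freq p :=
  mul_nonneg Real.two_pi_pos.le (Nat.cast_nonneg _)

/-- The oscillation with profile `ψ`; it closes up at time `1` when `ψ` is `2π`-periodic. -/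
def wave (ψ : ℝ → ℝ) (x : ℝ × F) : ℝ := O.amp x.2 * ψ (O.freq x.2 * x.1)

theorem wave_eventuallyEq (ψ : ℝ → ℝ) (x : ℝ × F) :
    O.wave ψ =ᶠ[𝓝 x] fun y => O.amp y.2 * ψ (O.freq x.2 * y.1) := by
  filter_upwards [continuous_snd.continuousAt.eventually (O.turns_eventually x.2)] with y hy
  rcases hy with hy | hy <;> simp [wave, freq, hy]

theorem contDiff_wave (hψ : ContDiff ℝ ∞ ψ) : ContDiff ℝ ∞ (O.wave ψ) :=
  contDiff_iff_contDiffAt.2 fun x => by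
    have hsmooth : ContDiff ℝ ∞ fun y : ℝ × F => O.amp y.2 * ψ (O.freq x.2 * y.1) :=
      (O.contDiff_amp.comp contDiff_snd).mul (hψ.comp (contDiff_const.mul contDiff_fst))
    exact hsmooth.contDiffAt.congr_of_eventuallyEq (O.wave_eventuallyEq ψ x)

theorem wave_zero (hψ : ψ 0 = 0) (p : F) : O.wave ψ (0, p) = 0 := by
  simp [wave, hψ]

theorem wave_one (hψ : ψ 0 = 0) (hper : Periodic ψ (2 * Real.pi)) (p : F) :
    O.wave ψ (1, p) = 0 := by
  rw [wave, mul_one, freq, mul_comm (2 * Real.pi), hper.nat_mul_eq, hψ, mul_zero]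

theorem hasDerivAt_wave {ψ' t : ℝ} {p : F} (hψ : HasDerivAt ψ ψ' (O.freq p * t)) :
    HasDerivAt (fun s => O.wave ψ (s, p)) (O.amp p * (ψ' * O.freq p)) t := by
  have hlin : HasDerivAt (fun s => O.freq p * s) (O.freq p) t := by
    simpa using (hasDerivAt_id t).const_mul (O.freq p)
  exact (hψ.comp t hlin).const_mul (O.amp p)

theorem c1BoundAt_wave (t : ℝ) {C c : ℝ} {p : F} (hψ : |ψ (O.freq p * t)| ≤ C)
    (hamp : C1BoundAt O.amp c p) : C1BoundAt (fun q => O.wave ψ (t, q)) (C * c) p := by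
  have hderiv : HasFDerivAt (fun q => O.wave ψ (t, q)) (ψ (O.freq p * t) • fderiv ℝ O.amp p) p :=
    (hamp.differentiableAt.hasFDerivAt.mul_const _).congr_of_eventuallyEq
      ((Continuous.prodMk_right t).continuousAt.eventually (O.wave_eventuallyEq ψ (t, p)))
  refine ⟨hderiv.differentiableAt, ?_, ?_⟩
  · rw [wave, mul_comm]
    exact norm_mul_le_of_le hψ hamp.norm_le
  · rw [hderiv.fderiv]
    exact norm_smul_le_mul hψ hamp.norm_fderiv_le

end Oscillator

end Oscillator

/-! ### Slabs -/

/-- The profile of a slab: a bump equal to `1` on `[1/4, 3/4]` and to `0` off `(1/8, 7/8)`. -/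
def plateau : ContDiffBump (1 / 2 : ℝ) := ⟨1 / 4, 3 / 8, by norm_num, by norm_num⟩

theorem plateau_eq_one {s : ℝ} (hs : s ∈ Icc (1 / 4 : ℝ) (3 / 4)) : plateau s = 1 :=
  plateau.one_of_mem_closedBall <| by
    rw [mem_closedBall, Real.dist_eq, abs_le, plateau]
    constructor <;> linarith [hs.1, hs.2]

theorem plateau_eq_zero {s : ℝ} (hs : s ≤ 1 / 8 ∨ 7 / 8 ≤ s) : plateau s = 0 :=
  plateau.zero_of_le_dist <| by
    rw [Real.dist_eq, le_abs, plateau]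
    exact hs.symm.imp (by intro; linarith) (by intro; linarith)

theorem exists_abs_deriv_plateau_le : ∃ C, ∀ s, |deriv plateau s| ≤ C :=
  plateau.hasCompactSupport.deriv.exists_bound_of_continuous
    ((plateau.contDiff (n := 1)).continuous_deriv le_rfl)

theorem plateau_fract_eq_one_or (s : ℝ) :
    plateau (Int.fract s) = 1 ∨ plateau (Int.fract (s + 1 / 2)) = 1 := by
  have hnonneg := Int.fract_nonneg s
  have hlt := Int.fract_lt_one s
  have hs := Int.floor_add_fract s
  rcases lt_or_ge (Int.fract s) (1 / 4) with hsmall | hsmall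
  · right
    have : Int.fract (s + 1 / 2) = Int.fract s + 1 / 2 :=
      Int.fract_eq_iff.2 ⟨by linarith, by linarith, ⌊s⌋, by linarith⟩
    exact plateau_eq_one ⟨by linarith, by linarith⟩
  · rcases le_or_gt (Int.fract s) (3 / 4) with hlarge | hlarge
    · exact Or.inl (plateau_eq_one ⟨hsmall, hlarge⟩)
    · right
      have : Int.fract (s + 1 / 2) = Int.fract s - 1 / 2 :=
        Int.fract_eq_iff.2 ⟨by linarith, by linarith, ⌊s⌋ + 1, by push_cast; linarith⟩
      exact plateau_eq_one ⟨by linarith, by linarith⟩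

theorem eventually_floor_eq_or_plateau_eq_zero (s : ℝ) :
    ∀ᶠ r in 𝓝 s, ⌊r⌋ = ⌊s⌋ ∨ plateau (Int.fract r) = 0 ∧ plateau (r - ⌊s⌋) = 0 := by
  have hleft : ∀ᶠ r in 𝓝 s, (⌊s⌋ : ℝ) - 1 / 8 < r := lt_mem_nhds (by linarith [Int.floor_le s])
  have hright : ∀ᶠ r in 𝓝 s, r < (⌊s⌋ : ℝ) + 1 := gt_mem_nhds (Int.lt_floor_add_one s)
  filter_upwards [hleft, hright] with r hleft hright
  rcases le_or_gt (⌊s⌋ : ℝ) r with h | h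
  · exact Or.inl (Int.floor_eq_iff.2 ⟨h, hright⟩)
  · have hfloor : ⌊r⌋ = ⌊s⌋ - 1 :=
      Int.floor_eq_iff.2 ⟨by push_cast; linarith, by push_cast; linarith⟩
    refine Or.inr ⟨plateau_eq_zero (Or.inr ?_), plateau_eq_zero (Or.inl (by linarith))⟩
    rw [Int.fract, hfloor]
    push_cast
    linarith

theorem eventually_floor_comp_eq_or {X : Type*} [TopologicalSpace X] {f : X → ℝ}
    (hf : Continuous f) (p : X) :
    ∀ᶠ q in 𝓝 p, ⌊f q⌋ = ⌊f p⌋ ∨ plateau (Int.fract (f q)) = 0 ∧ plateau (f q - ⌊f p⌋) = 0 :=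
  hf.continuousAt.eventually (eventually_floor_eq_or_plateau_eq_zero (f p))

theorem slab_eventuallyEq {X : Type*} [TopologicalSpace X] {f : X → ℝ} (hf : Continuous f)
    (A : ℤ → ℝ) (p : X) :
    (fun q => A ⌊f q⌋ * plateau (Int.fract (f q))) =ᶠ[𝓝 p]
      fun q => A ⌊f p⌋ * plateau (f q - ⌊f p⌋) := by
  filter_upwards [eventually_floor_comp_eq_or hf p] with q hq
  rcases hq with hq | ⟨hq, hq'⟩
  · rw [Int.fract, hq]
  · simp [hq, hq']

section Slab

variable {F : Type*} [NormedAddCommGroup F] [NormedSpace ℝ F]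

/-- The oscillator which on the slab `k ≤ f < k + 1` makes `m k` turns with amplitude `A k`, cut off
near the faces of the slab. -/
def Oscillator.slab {f : F → ℝ} (hf : ContDiff ℝ ∞ f) (A : ℤ → ℝ) (m : ℤ → ℕ) : Oscillator F where
  amp p := A ⌊f p⌋ * plateau (Int.fract (f p))
  turns p := m ⌊f p⌋
  contDiff_amp := contDiff_iff_contDiffAt.2 fun p =>
    (contDiff_const.mul (plateau.contDiff.comp (hf.sub contDiff_const))).contDiffAt
      |>.congr_of_eventuallyEq (slab_eventuallyEq hf.continuous A p)
  turns_eventually p := (eventually_floor_comp_eq_or hf.continuous p).mono fun q hq =>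
    hq.symm.imp (fun h => by simp [h.1]) (fun h => by rw [h])

theorem Oscillator.c1BoundAt_slab_amp {f : F → ℝ} (hf : ContDiff ℝ ∞ f) {A : ℤ → ℝ} {m : ℤ → ℕ}
    {c : ℝ} {p : F} (hA : |A ⌊f p⌋| ≤ c)
    (hA_deriv : |A ⌊f p⌋| * (|deriv plateau (Int.fract (f p))| * ‖fderiv ℝ f p‖) ≤ c) :
    C1BoundAt (slab hf A m).amp c p := by
  have hplateau : HasDerivAt plateau (deriv plateau (Int.fract (f p))) (f p - ⌊f p⌋) :=
    (plateau.contDiff.differentiable one_ne_zero _).hasDerivAt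
  have hlocal : HasFDerivAt (fun q => plateau (f q - ⌊f p⌋))
      (deriv plateau (Int.fract (f p)) • fderiv ℝ f p) p :=
    hplateau.comp_hasFDerivAt (h₂ := plateau) p
      ((hf.differentiable (by simp) p).hasFDerivAt.sub_const _)
  have hderiv : HasFDerivAt (slab hf A m).amp
      (A ⌊f p⌋ • deriv plateau (Int.fract (f p)) • fderiv ℝ f p) p :=
    (hlocal.const_mul _).congr_of_eventuallyEq (slab_eventuallyEq hf.continuous A p)
  refine ⟨hderiv.differentiableAt, ?_, ?_⟩
  · calc ‖A ⌊f p⌋ * plateau (Int.fract (f p))‖ ≤ c * 1 :=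
          norm_mul_le_of_le hA (by simpa [abs_of_nonneg plateau.nonneg] using plateau.le_one)
      _ = c := mul_one c
  · rw [hderiv.fderiv, norm_smul, norm_smul]
    exact hA_deriv

/-- `β k` bounds on the sublevel set `ρ ≤ k + 1`, which contains the `k`-th slab of `ρ` and of
`ρ + 1/2`, both `ρ` and the derivative of a plateau in `ρ`. -/
structure SlabBound (ρ : F → ℝ) (β : ℤ → ℝ) : Prop where
  le (k : ℤ) (p : F) : ρ p ≤ k + 1 → ρ p ≤ β k
  deriv_le (k : ℤ) (p : F) (s : ℝ) : ρ p ≤ k + 1 → |deriv plateau s| * ‖fderiv ℝ ρ p‖ ≤ β k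
  one_le (k : ℤ) : 1 ≤ β k

theorem exists_slabBound [FiniteDimensional ℝ F] {ρ : F → ℝ} (hρ : ContDiff ℝ ∞ ρ)
    (hle : ∀ p, ‖p‖ ≤ ρ p) : ∃ β, SlabBound ρ β := by
  obtain ⟨C, hC⟩ := exists_abs_deriv_plateau_le
  have bounded (k : ℤ) : ∃ D, ∀ p, ρ p ≤ k + 1 → ‖fderiv ℝ ρ p‖ ≤ D := by
    obtain ⟨D, hD⟩ := (isCompact_closedBall (0 : F) (k + 1)).exists_bound_of_continuousOn
      (hρ.continuous_fderiv (by simp)).continuousOn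
    exact ⟨D, fun p hp => hD p (mem_closedBall_zero_iff.2 ((hle p).trans hp))⟩
  choose D hD using bounded
  refine ⟨fun k => max (max (k + 1) (C * D k)) 1, fun k p hp => ?_, fun k p s hp => ?_, fun k => ?_⟩
  · exact hp.trans ((le_max_left _ _).trans (le_max_left _ _))
  · calc |deriv plateau s| * ‖fderiv ℝ ρ p‖ ≤ C * D k := by
          gcongr
          exacts [(abs_nonneg _).trans (hC s), hC s, hD k p hp]
      _ ≤ _ := (le_max_right _ _).trans (le_max_left _ _)
  · exact le_max_right _ _

/-- The oscillator on the slabs of `ρ + c` with amplitude `(β k)⁻²` on the `k`-th of them. -/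
def slabOscillator {ρ : F → ℝ} (hρ : ContDiff ℝ ∞ ρ) (c : ℝ) (β : ℤ → ℝ) (m : ℤ → ℕ) :
    Oscillator F :=
  .slab (hρ.add contDiff_const : ContDiff ℝ ∞ fun p => ρ p + c) (fun k => (β k ^ 2)⁻¹) m

namespace SlabBound

variable {ρ : F → ℝ} {β : ℤ → ℝ} {p : F} {c : ℝ}

theorem le_floor (hβ : SlabBound ρ β) (hc : 0 ≤ c) : ρ p ≤ β ⌊ρ p + c⌋ :=
  hβ.le _ p (by linarith [Int.lt_floor_add_one (ρ p + c)])

theorem c1BoundAt_amp (hβ : SlabBound ρ β) (hρ : ContDiff ℝ ∞ ρ) (hpos : 0 < ρ p) (hc : 0 ≤ c)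
    (m : ℤ → ℕ) : C1BoundAt (slabOscillator hρ c β m).amp (ρ p)⁻¹ p := by
  set k := ⌊ρ p + c⌋ with hk
  have one_le := hβ.one_le k
  have inv_le : (β k)⁻¹ ≤ (ρ p)⁻¹ := inv_anti₀ hpos (hβ.le_floor hc)
  have abs_amp : |(β k ^ 2)⁻¹| = (β k ^ 2)⁻¹ := abs_of_nonneg (by positivity)
  refine Oscillator.c1BoundAt_slab_amp _ ?_ ?_
  · calc |(β k ^ 2)⁻¹| = (β k ^ 2)⁻¹ := abs_amp
      _ ≤ (β k)⁻¹ := inv_anti₀ (by positivity) (le_self_pow₀ one_le two_ne_zero)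
      _ ≤ (ρ p)⁻¹ := inv_le
  · calc _ ≤ (β k ^ 2)⁻¹ * β k := by
          rw [← hk, abs_amp, fderiv_add_const]
          gcongr
          exact hβ.deriv_le k p _ (by linarith [Int.lt_floor_add_one (ρ p + c)])
      _ = (β k)⁻¹ := by field_simp
      _ ≤ (ρ p)⁻¹ := inv_le

theorem le_amp_sq_mul_freq (hβ : SlabBound ρ β) (hρ : ContDiff ℝ ∞ ρ) (hc : 0 ≤ c) {m : ℤ → ℕ}
    (hm : ∀ k, β k ^ 5 ≤ m k) (hp : plateau (Int.fract (ρ p + c)) = 1) :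
    ρ p ≤ (slabOscillator hρ c β m).amp p ^ 2 * (slabOscillator hρ c β m).freq p := by
  set k := ⌊ρ p + c⌋ with hk
  have one_le := hβ.one_le k
  have hamp : (slabOscillator hρ c β m).amp p = (β k ^ 2)⁻¹ := by
    simp [slabOscillator, Oscillator.slab, hp, hk]
  have hfreq : β k ^ 5 ≤ (slabOscillator hρ c β m).freq p :=
    calc β k ^ 5 ≤ m k := hm k
      _ ≤ 2 * Real.pi * m k :=
        le_mul_of_one_le_left (Nat.cast_nonneg _) (by linarith [Real.pi_gt_three])
  calc ρ p ≤ β k := hβ.le_floor hc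
    _ = ((β k ^ 2)⁻¹) ^ 2 * β k ^ 5 := by field_simp
    _ ≤ _ := by rw [hamp]; gcongr

end SlabBound

theorem exists_oscillator_pair [FiniteDimensional ℝ F] {ρ : F → ℝ} (hρ : ContDiff ℝ ∞ ρ)
    (hpos : ∀ p, 0 < ρ p) (hle : ∀ p, ‖p‖ ≤ ρ p) :
    ∃ O₁ O₂ : Oscillator F,
      (∀ p, C1BoundAt O₁.amp (ρ p)⁻¹ p) ∧ (∀ p, C1BoundAt O₂.amp (ρ p)⁻¹ p) ∧
      (∀ p, 16 * O₁.freq p ≤ O₂.freq p) ∧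
      ∀ p, ρ p ≤ O₁.amp p ^ 2 * O₁.freq p + O₂.amp p ^ 2 * O₂.freq p := by
  obtain ⟨β, hβ⟩ := exists_slabBound hρ hle
  choose m hm using fun k => exists_nat_ge (β k ^ 5)
  let m' (k : ℤ) : ℕ := 16 * (m k + m (k - 1))
  have hm' (k : ℤ) : β k ^ 5 ≤ m' k := (hm k).trans (by exact_mod_cast (by grind : m k ≤ m' k))
  have hturns (p : F) : 16 * m ⌊ρ p + 0⌋ ≤ m' ⌊ρ p + 1 / 2⌋ := by
    have hge : ⌊ρ p + 1 / 2⌋ - 1 ≤ ⌊ρ p + 0⌋ :=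
      Int.le_floor.2 (by push_cast; linarith [Int.floor_le (ρ p + 1 / 2)])
    have hle : ⌊ρ p + 0⌋ ≤ ⌊ρ p + 1 / 2⌋ := Int.floor_mono (by norm_num)
    obtain h | h : ⌊ρ p + 0⌋ = ⌊ρ p + 1 / 2⌋ ∨ ⌊ρ p + 0⌋ = ⌊ρ p + 1 / 2⌋ - 1 := by lia
    all_goals simp only [h, m']; lia
  refine ⟨slabOscillator hρ 0 β m, slabOscillator hρ (1 / 2) β m',
    fun p => hβ.c1BoundAt_amp hρ (hpos p) le_rfl m,
    fun p => hβ.c1BoundAt_amp hρ (hpos p) (by norm_num) m', fun p => ?_, fun p => ?_⟩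
  · have : (16 * m ⌊ρ p + 0⌋ : ℝ) ≤ m' ⌊ρ p + 1 / 2⌋ := by exact_mod_cast hturns p
    calc 16 * (2 * Real.pi * m ⌊ρ p + 0⌋) = 2 * Real.pi * (16 * m ⌊ρ p + 0⌋) := by ring
      _ ≤ 2 * Real.pi * m' ⌊ρ p + 1 / 2⌋ := by gcongr
  · have hnonneg (O : Oscillator F) : 0 ≤ O.amp p ^ 2 * O.freq p :=
      mul_nonneg (sq_nonneg _) (O.freq_nonneg p)
    rcases plateau_fract_eq_one_or (ρ p) with h | h
    · exact (hβ.le_amp_sq_mul_freq hρ le_rfl hm (by rwa [add_zero])).trans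
        (le_add_of_nonneg_right (hnonneg _))
    · exact (hβ.le_amp_sq_mul_freq hρ (by norm_num) hm' h).trans
        (le_add_of_nonneg_left (hnonneg _))

end Slab

/-! ### Positive loops -/

namespace Oscillator

variable {F : Type*} [NormedAddCommGroup F] [NormedSpace ℝ F] (O : Oscillator F)

/-- The `x`-coordinate of a circle of radius `amp` through the origin. -/
def cosWave : ℝ × F → ℝ := O.wave fun θ => Real.cos θ - 1

/-- The `y`-coordinate of a circle of radius `amp` through the origin. -/
def sinWave : ℝ × F → ℝ := O.wave Real.sin

/-- The `z`-displacement along the circle `(cosWave, sinWave)` for which `dz + x dy` takes the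
constant value `amp² freq / 2` on the velocity of the resulting loop. -/
def liftWave (x : ℝ × F) : ℝ := 1 / 2 * ((O.amp x.2 - O.cosWave x) * O.sinWave x)

theorem contDiff_cosWave : ContDiff ℝ ∞ O.cosWave :=
  O.contDiff_wave (Real.contDiff_cos.sub contDiff_const)

theorem contDiff_sinWave : ContDiff ℝ ∞ O.sinWave :=
  O.contDiff_wave Real.contDiff_sin

theorem contDiff_liftWave : ContDiff ℝ ∞ O.liftWave :=
  contDiff_const.mul
    (((O.contDiff_amp.comp contDiff_snd).sub O.contDiff_cosWave).mul O.contDiff_sinWave)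

theorem cosWave_eq_zero {t : ℝ} {p : F} (ht : t = 0 ∨ t = 1) : O.cosWave (t, p) = 0 := by
  rcases ht with rfl | rfl
  · exact O.wave_zero (by simp) p
  · exact O.wave_one (by simp) (fun θ => by simp) p

theorem sinWave_eq_zero {t : ℝ} {p : F} (ht : t = 0 ∨ t = 1) : O.sinWave (t, p) = 0 := by
  rcases ht with rfl | rfl
  · exact O.wave_zero Real.sin_zero p
  · exact O.wave_one Real.sin_zero Real.sin_periodic p

variable (t : ℝ) (p : F)

theorem hasDerivAt_cosWave :
    HasDerivAt (fun s => O.cosWave (s, p)) (O.amp p * (-Real.sin (O.freq p * t) * O.freq p)) t :=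
  O.hasDerivAt_wave ((Real.hasDerivAt_cos _).sub_const 1)

theorem hasDerivAt_sinWave :
    HasDerivAt (fun s => O.sinWave (s, p)) (O.amp p * (Real.cos (O.freq p * t) * O.freq p)) t :=
  O.hasDerivAt_wave (Real.hasDerivAt_sin _)

theorem hasDerivAt_liftWave :
    HasDerivAt (fun s => O.liftWave (s, p)) (1 / 2 * (O.amp p ^ 2 * O.freq p) -
      O.cosWave (t, p) * (O.amp p * (Real.cos (O.freq p * t) * O.freq p))) t := by
  refine ((((O.hasDerivAt_cosWave t p).const_sub (O.amp p)).mul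
    (O.hasDerivAt_sinWave t p)).const_mul (1 / 2)).congr_deriv ?_
  simp only [cosWave, sinWave, wave]
  linear_combination 1 / 2 * O.amp p ^ 2 * O.freq p * Real.sin_sq_add_cos_sq (O.freq p * t)

variable {p} {c : ℝ}

theorem c1BoundAt_cosWave (hamp : C1BoundAt O.amp c p) :
    C1BoundAt (fun q => O.cosWave (t, q)) (2 * c) p :=
  O.c1BoundAt_wave t (abs_le.2 ⟨by linarith [Real.neg_one_le_cos (O.freq p * t)],
    by linarith [Real.cos_le_one (O.freq p * t)]⟩) hamp

theorem c1BoundAt_sinWave (hamp : C1BoundAt O.amp c p) :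
    C1BoundAt (fun q => O.sinWave (t, q)) c p := by
  rw [← one_mul c]
  exact O.c1BoundAt_wave t (Real.abs_sin_le_one _) hamp

theorem c1BoundAt_liftWave (hamp : C1BoundAt O.amp c p) :
    C1BoundAt (fun q => O.liftWave (t, q)) (3 * c ^ 2) p := by
  refine (((hamp.sub (O.c1BoundAt_cosWave t hamp)).mul
    (O.c1BoundAt_sinWave t hamp)).const_smul (1 / 2)).mono (le_of_eq ?_)
  norm_num
  ring

end Oscillator

section Loop

variable (i : Fin n)

/-- The inclusion of the `(xᵢ, yᵢ, z)`-space into `ℝ^{2n+1}`. -/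
def tripleInclusion : ℝ × ℝ × ℝ →L[ℝ] E n :=
  (ContinuousLinearMap.single ℝ (fun _ => ℝ) i).prodMap
    ((ContinuousLinearMap.single ℝ (fun _ => ℝ) i).prodMap (ContinuousLinearMap.id ℝ ℝ))

theorem norm_tripleInclusion_le : ‖tripleInclusion i‖ ≤ 1 :=
  ContinuousLinearMap.opNorm_le_bound _ zero_le_one fun v => by
    simp [tripleInclusion, Prod.norm_def, Pi.norm_single]

theorem α₀_tripleInclusion (p : E n) (v w : ℝ × ℝ × ℝ) :
    α₀ n (p + tripleInclusion i v) (tripleInclusion i w) = w.2.2 + (p.1 i + v.1) * w.2.1 := by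
  simp [α₀, tripleInclusion, Pi.single_apply]

theorem c1BoundAt_coord (p : E n) : C1BoundAt (fun q : E n => q.1 i) (1 + ‖p‖) p := by
  let L : E n →L[ℝ] ℝ :=
    (ContinuousLinearMap.proj i).comp (ContinuousLinearMap.fst ℝ (Fin n → ℝ) _)
  have hL (q : E n) : ‖L q‖ ≤ ‖q‖ := (norm_le_pi_norm q.1 i).trans (norm_fst_le q)
  refine ⟨L.differentiableAt, (hL p).trans (by simp), ?_⟩
  calc ‖fderiv ℝ L p‖ = ‖L‖ := by rw [L.fderiv]
    _ ≤ 1 := L.opNorm_le_bound zero_le_one fun q => by simpa using hL q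
    _ ≤ 1 + ‖p‖ := le_add_of_nonneg_right (norm_nonneg p)

variable (O O' : Oscillator (E n))

/-- The displacement superposing two circular motions in the `(xᵢ, yᵢ)`-plane; the `z`-component
cancels the terms of `dz + ∑ xⱼ dyⱼ` that do not have a sign. -/
def wiggle (x : ℝ × E n) : ℝ × ℝ × ℝ :=
  (O.cosWave x + O'.cosWave x, O.sinWave x + O'.sinWave x,
    O.liftWave x + O'.liftWave x - x.2.1 i * (O.sinWave x + O'.sinWave x) -
      O.cosWave x * O'.sinWave x)

theorem contDiff_wiggle : ContDiff ℝ ∞ (wiggle i O O') := by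
  have := O.contDiff_cosWave
  have := O'.contDiff_cosWave
  have := O.contDiff_sinWave
  have := O'.contDiff_sinWave
  have := O.contDiff_liftWave
  have := O'.contDiff_liftWave
  unfold wiggle
  fun_prop

theorem wiggle_eq_zero {t : ℝ} {p : E n} (ht : t = 0 ∨ t = 1) : wiggle i O O' (t, p) = 0 := by
  simp [wiggle, Oscillator.liftWave, Oscillator.cosWave_eq_zero _ ht,
    Oscillator.sinWave_eq_zero _ ht]

theorem c1BoundAt_wiggle (t : ℝ) {p : E n} {ε : ℝ} (h : C1BoundAt O.amp ε p)
    (h' : C1BoundAt O'.amp ε p) (hε : ε * (1 + ‖p‖) ≤ 1 / 16) :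
    C1BoundAt (fun q => wiggle i O O' (t, q)) (1 / 2) p := by
  have hε0 : 0 ≤ ε := (norm_nonneg _).trans h.norm_le
  have hε1 : ε ≤ 1 / 16 := (le_mul_of_one_le_right hε0 (by simp)).trans hε
  have hx := (O.c1BoundAt_cosWave t h).add (O'.c1BoundAt_cosWave t h')
  have hy := (O.c1BoundAt_sinWave t h).add (O'.c1BoundAt_sinWave t h')
  have hz := (((O.c1BoundAt_liftWave t h).add (O'.c1BoundAt_liftWave t h')).sub
    ((c1BoundAt_coord i p).mul hy)).sub ((O.c1BoundAt_cosWave t h).mul (O'.c1BoundAt_sinWave t h'))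
  exact (hx.mono (by linarith)).prodMk ((hy.mono (by linarith)).prodMk (hz.mono (by nlinarith)))

/-- The loop of maps adding to each point its `wiggle`. -/
def wiggleLoop (x : ℝ × E n) : E n := x.2 + tripleInclusion i (wiggle i O O' x)

theorem contDiff_wiggleLoop : ContDiff ℝ ∞ (wiggleLoop i O O') :=
  contDiff_snd.add ((tripleInclusion i).contDiff.comp (contDiff_wiggle i O O'))

variable (t : ℝ) (p : E n)

theorem α₀_pathDeriv_wiggleLoop :
    α₀ n (wiggleLoop i O O' (t, p)) (pathDeriv n (wiggleLoop i O O') t p) =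
      1 / 2 * (O.amp p ^ 2 * O.freq p + O'.amp p ^ 2 * O'.freq p) + O.amp p * O'.amp p * O.freq p *
        (Real.cos (O.freq p * t - O'.freq p * t) - Real.cos (O.freq p * t)) := by
  have hy := (O.hasDerivAt_sinWave t p).add (O'.hasDerivAt_sinWave t p)
  have hwiggle := ((O.hasDerivAt_cosWave t p).add (O'.hasDerivAt_cosWave t p)).prodMk (hy.prodMk
    ((((O.hasDerivAt_liftWave t p).add (O'.hasDerivAt_liftWave t p)).sub
      (hy.const_mul (p.1 i))).sub ((O.hasDerivAt_cosWave t p).mul (O'.hasDerivAt_sinWave t p))))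
  have hloop := ((tripleInclusion i).hasFDerivAt.comp_hasDerivAt t hwiggle).const_add p
  have hderiv : pathDeriv n (wiggleLoop i O O') t p = _ := hloop.deriv
  rw [hderiv, wiggleLoop, α₀_tripleInclusion, Real.cos_sub]
  simp only [wiggle, Oscillator.cosWave, Oscillator.sinWave, Oscillator.wave]
  ring

variable {p} in
theorem le_α₀_pathDeriv_wiggleLoop (hfreq : 16 * O.freq p ≤ O'.freq p) :
    (O.amp p ^ 2 * O.freq p + O'.amp p ^ 2 * O'.freq p) / 4 ≤
      α₀ n (wiggleLoop i O O' (t, p)) (pathDeriv n (wiggleLoop i O O') t p) := by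
  rw [α₀_pathDeriv_wiggleLoop]
  set a := O.amp p
  set a' := O'.amp p
  set w := O.freq p
  set δ := Real.cos (w * t - O'.freq p * t) - Real.cos (w * t)
  have hw : 0 ≤ w := O.freq_nonneg p
  have hδ : |δ| ≤ 2 := by
    linarith [abs_sub (Real.cos (w * t - O'.freq p * t)) (Real.cos (w * t)),
      Real.abs_cos_le_one (w * t - O'.freq p * t), Real.abs_cos_le_one (w * t)]
  have cross : |a * a' * w * δ| ≤ (a ^ 2 * w + a' ^ 2 * O'.freq p) / 4 :=
    calc |a * a' * w * δ| = |a * a'| * w * |δ| := by rw [abs_mul, abs_mul, abs_of_nonneg hw]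
      _ ≤ (a ^ 2 + 16 * a' ^ 2) / 8 * w * 2 := by
        gcongr
        rw [abs_le]
        constructor <;> linarith [sq_nonneg (a + 4 * a'), sq_nonneg (a - 4 * a')]
      _ = (a ^ 2 * w + a' ^ 2 * (16 * w)) / 4 := by ring
      _ ≤ _ := by gcongr
  linarith [neg_abs_le (a * a' * w * δ)]

end Loop

theorem exists_positive_loop (i : Fin n) {K : E n → ℝ} (hK : Continuous K) :
    ∃ ℓ : ℝ × E n → E n, IsSmoothPath n ℓ ∧ (∀ p, ℓ (0, p) = p) ∧ (∀ p, ℓ (1, p) = p) ∧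
      ∀ t p, ‖ℓ (t, p) - p‖ ≤ 1 ∧ ‖fderiv ℝ (fun q => ℓ (t, q)) p‖ ≤ 2 ∧
        K p < α₀ n (ℓ (t, p)) (pathDeriv n ℓ t p) := by
  obtain ⟨ρ, hρ, hle⟩ := exists_contDiff_majorant (π := fun p : E n => p)
    (f := fun p => 16 * (1 + ‖p‖) + 4 * |K p|) fun R => by
      obtain ⟨C, hC⟩ := (isCompact_closedBall (0 : E n) R).exists_bound_of_continuousOn
        (f := fun p => 16 * (1 + ‖p‖) + 4 * |K p|) (by fun_prop)
      exact ⟨C, fun p hp => (le_abs_self _).trans (hC p (by simpa using hp))⟩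
  have hnorm (p : E n) : 16 * (1 + ‖p‖) ≤ ρ p := by linarith [hle p, abs_nonneg (K p)]
  have hpos (p : E n) : 0 < ρ p := by linarith [hnorm p, norm_nonneg p]
  obtain ⟨O, O', hO, hO', hfreq, hgain⟩ := exists_oscillator_pair hρ hpos fun p => by
    linarith [hnorm p, norm_nonneg p]
  let displacement (t : ℝ) (p : E n) : E n := tripleInclusion i (wiggle i O O' (t, p))
  have hsmooth (t : ℝ) : ContDiff ℝ ∞ (displacement t) :=
    (tripleInclusion i).contDiff.comp ((contDiff_wiggle i O O').comp (contDiff_prodMk_right t))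
  have hbound (t : ℝ) (p : E n) : C1BoundAt (displacement t) (1 / 2) p := by
    have : (ρ p)⁻¹ * (1 + ‖p‖) ≤ 1 / 16 := (inv_mul_le_iff₀ (hpos p)).2 (by linarith [hnorm p])
    exact (c1BoundAt_wiggle i O O' t (hO p) (hO' p) this).clm_comp (norm_tripleInclusion_le i)
  have hdiffeo (t : ℝ) : IsDiffeo n fun p => wiggleLoop i O O' (t, p) :=
    isDiffeo_id_add one_half_lt_one (hsmooth t) fun p => (hbound t p).norm_fderiv_le
  refine ⟨wiggleLoop i O O', ⟨contDiff_wiggleLoop i O O', fun t _ => hdiffeo t⟩, ?_, ?_,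
    fun t p => ⟨?_, ?_, ?_⟩⟩
  · simp [wiggleLoop, wiggle_eq_zero]
  · simp [wiggleLoop, wiggle_eq_zero]
  · simpa [wiggleLoop] using (hbound t p).norm_le.trans one_half_lt_one.le
  · exact (hbound t p).norm_fderiv_id_add_le.trans (by norm_num)
  · calc K p < ρ p / 4 := by linarith [hle p, le_abs_self (K p), norm_nonneg p]
      _ ≤ _ := by gcongr; exact hgain p
      _ ≤ _ := le_α₀_pathDeriv_wiggleLoop i O O' t (hfreq p)

theorem IsSmoothPath.isPositivePath_comp {ℓ h : ℝ × E n → E n} {K : E n → ℝ}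
    (hℓ : IsSmoothPath n ℓ) (hh : IsSmoothPath n h)
    (hK : ∀ t ∈ Icc (0 : ℝ) 1, ∀ q, ‖pathDeriv n h t q‖ ≤ K (h (t, q)))
    (hnear : ∀ t p, ‖ℓ (t, p) - p‖ ≤ 1) (hfderiv : ∀ t p, ‖fderiv ℝ (fun q => ℓ (t, q)) p‖ ≤ 2)
    (hpos : ∀ t p, (1 + n * (1 + ‖p‖)) * (2 * K p) < α₀ n (ℓ (t, p)) (pathDeriv n ℓ t p)) :
    IsPositivePath n (fun x => ℓ (x.1, h x)) := fun t ht q => by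
  let p := h (t, q)
  let v := fderiv ℝ (fun q => ℓ (t, q)) p (pathDeriv n h t q)
  have hnorm : ‖ℓ (t, p)‖ ≤ 1 + ‖p‖ := by linarith [norm_sub_norm_le (ℓ (t, p)) p, hnear t p]
  have hv : ‖v‖ ≤ 2 * K p :=
    (ContinuousLinearMap.le_opNorm _ _).trans
      (mul_le_mul (hfderiv t p) (hK t ht q) (norm_nonneg _) zero_le_two)
  have drift : |α₀ n (ℓ (t, p)) v| ≤ (1 + n * (1 + ‖p‖)) * (2 * K p) :=
    (abs_α₀_le _ _).trans (by gcongr)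
  rw [pathDeriv_comp (hℓ.1.differentiable (by simp) _) (hh.1.differentiable (by simp) _), α₀_add]
  linarith [hpos t p, neg_abs_le (α₀ n (ℓ (t, p)) v)]

/-- Every diffeomorphism of `ℝ^{2n+1}` (standard contact structure) that is
connected to the identity by a smooth path of diffeomorphisms is connected to the identity by a
positive path of diffeomorphisms. -/
theorem positive_path_to_any_diffeo (n : ℕ) (hn : 1 ≤ n) (f : E n → E n)
    (hf : IsDiffeo n f) (hconn : ConnToId n f) :
    ∃ g : ℝ × E n → E n, IsSmoothPath n g ∧ IsPositivePath n g ∧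
      (∀ p, g (0, p) = p) ∧ (∀ p, g (1, p) = f p) := by
  obtain ⟨h, hh, h_zero, h_one⟩ := hconn
  obtain ⟨K, hK, hspeed⟩ := hh.exists_norm_pathDeriv_le
  obtain ⟨ℓ, hℓ, ℓ_zero, ℓ_one, hbounds⟩ := exists_positive_loop ⟨0, hn⟩
    (K := fun p => (1 + n * (1 + ‖p‖)) * (2 * K p)) (by fun_prop)
  refine ⟨fun x => ℓ (x.1, h x), hℓ.comp hh, ?_, fun p => ?_, fun p => ?_⟩
  · exact hℓ.isPositivePath_comp hh hspeed (fun t p => (hbounds t p).1)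
      (fun t p => (hbounds t p).2.1) (fun t p => (hbounds t p).2.2)
  · simp only [ℓ_zero, h_zero]
  · simp only [ℓ_one, h_one]
end
end
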